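/- arXiv:1801.01556 — 6 statements merged into one kernel-verified Lean document; each statement's English description precedes it below -/
import Mathlib

section
/- For every integer k ≥ 5 and every graph G on n vertices, the number of induced copies of the cycle C_k of length k in G is at most 2n^k/k^k. -/
open Finset

open Classical in
noncomputable def Cd {V : Type} [Fintype V] (G : SimpleGraph V) {k : ℕ} (r : Fin k → Fin k → Prop)
    (i : Fin k) (f : Fin k → V) : Finset V :=
  univ.filter fun v => ∀ j, i < j → (G.Adj v (f j) ↔ r i j)

open Classical in
lemma sum_wt {V : Type} [Fintype V] (G : SimpleGraph V) (k : ℕ) :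
    ∀ (r : Fin k → Fin k → Prop),
    ∑ f : Fin k → V, ∏ i, (if f i ∈ Cd G r i f then ((Cd G r i f).card : ℝ)⁻¹ else 0) ≤ 1 := by
  induction k with
  | zero => intro r; simp
  | succ k ih =>
    intro r
    rw [← (Fin.consEquiv (fun _ : Fin (k+1) => V)).sum_comp, Fintype.sum_prod_type_right]
    refine le_trans (Finset.sum_le_sum (fun g _ => ?_)) (ih fun i j => r i.succ j.succ)
    have h1 : ∀ (v : V) (i : Fin k), Cd G r i.succ (Fin.cons v g : Fin (k+1) → V)
        = Cd G (fun i j => r i.succ j.succ) i g := by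
      intro v i
      ext w
      simp only [Cd, mem_filter, mem_univ, true_and]
      constructor
      · intro h j hj
        have := h j.succ (by simpa using hj)
        simpa using this
      · intro h j
        refine Fin.cases ?_ (fun j => ?_) j
        · intro h; simp at h
        · intro hj
          have := h j (by simpa using hj)
          simpa using this
    have h0 : ∀ v w : V, Cd G r 0 (Fin.cons v g : Fin (k+1) → V) = Cd G r 0 (Fin.cons w g : Fin (k+1) → V) := by
      intro v w
      ext x
      simp only [Cd, mem_filter, mem_univ, true_and]
      refine forall_congr' fun j => ?_
      refine Fin.cases ?_ (fun j => ?_) j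
      · simp
      · simp
    simp only [Fin.consEquiv, Equiv.coe_fn_mk, Fin.prod_univ_succ, Fin.cons_zero, Fin.cons_succ, h1]
    rw [← Finset.sum_mul]
    refine mul_le_of_le_one_left (Finset.prod_nonneg fun i _ => by positivity) ?_
    rcases isEmpty_or_nonempty V with hV | ⟨⟨w⟩⟩
    · simp
    · rw [Finset.sum_congr rfl (fun v _ => by rw [h0 v w])]
      rw [← Finset.sum_filter]
      simp
      exact mul_inv_le_one

section
open Fin.CommRing
variable {m : ℕ}

def rot (s : Fin (m+5) × Bool) (i : Fin (m+5)) : Fin (m+5) :=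
  if s.2 then s.1 + i else s.1 - i

lemma two_ne : (2 : Fin (m+5)) ≠ 0 := by
  intro h; have := congrArg Fin.val h
  rw [Fin.coe_ofNat_eq_mod, Nat.mod_eq_of_lt (by omega)] at this; simp at this
lemma three_ne : (3 : Fin (m+5)) ≠ 0 := by
  intro h; have := congrArg Fin.val h
  rw [Fin.coe_ofNat_eq_mod, Nat.mod_eq_of_lt (by omega)] at this; simp at this
lemma four_ne : (4 : Fin (m+5)) ≠ 0 := by
  intro h; have := congrArg Fin.val h
  rw [Fin.coe_ofNat_eq_mod, Nat.mod_eq_of_lt (by omega)] at this; simp at this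
lemma one_ne : (1 : Fin (m+5)) ≠ 0 := by simp

lemma cyc_adj {i j : Fin (m+5)} (h : i < j) : (SimpleGraph.cycleGraph (m+5)).Adj i j ↔
    j.val = i.val + 1 ∨ (i.val = 0 ∧ j.val = m + 4) := by
  rw [SimpleGraph.cycleGraph_adj', Fin.sub_val_of_le h.le, Fin.coe_sub_iff_lt.2 h]
  have := i.2
  have := j.2
  have : i.val < j.val := h
  omega

lemma last_eq : (⟨m+4, by omega⟩ : Fin (m+5)) = -1 := by
  rw [eq_neg_iff_add_eq_zero]
  apply Fin.ext
  simp [Fin.val_add]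
lemma last_eq' : (⟨m+3, by omega⟩ : Fin (m+5)) = -2 := by
  rw [eq_neg_iff_add_eq_zero]
  apply Fin.ext
  rw [Fin.val_add, Fin.coe_ofNat_eq_mod, Nat.mod_eq_of_lt (a := 2) (by omega)]
  simp

def PP (B : Fin (m+5) → Prop) (i : Fin (m+5)) : Prop :=
  ∀ j, i < j → (B j ↔ (SimpleGraph.cycleGraph (m+5)).Adj i j)

noncomputable def cc (i : Fin (m+5)) : ℝ :=
  if i.val = m + 4 then 1/(m+5) else if i.val = m+3 ∨ i.val = m+2 then 1/2 else 1

lemma cc_pos (i : Fin (m+5)) : 0 < cc i := by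
  unfold cc; split_ifs <;> positivity

lemma cc_prod : ∏ i : Fin (m+5), cc i = 1 / (4 * (m+5)) := by
  rw [Fin.prod_univ_castSucc, Fin.prod_univ_castSucc, Fin.prod_univ_castSucc]
  have : ∀ i : Fin (m+2), cc (m := m) i.castSucc.castSucc.castSucc = 1 := by
    intro i
    have := i.2
    unfold cc
    simp
    rw [if_neg (by omega), if_neg (by omega)]
  simp only [this]
  simp [cc]
  field_simp
  norm_num

open Classical in
lemma pt (B : Fin (m+5) → Prop) :
    ∑ i, (if PP B i then cc i else 0) ≤
      1/(m+5 : ℝ) + (if B (-1) ∨ B (-2) then 1/2 else 1) + (if PP B 0 then 1 else 0) := by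
  rw [Fin.sum_univ_succ, Fin.sum_univ_castSucc]
  have h0 : cc (0 : Fin (m+5)) = 1 := by simp [cc]
  have h1 : (if PP B (Fin.last (m+3)).succ then cc (Fin.last (m+3)).succ else 0) ≤ 1/(m+5 : ℝ) := by
    split_ifs
    · simp [cc]
    · positivity
  rw [h0]
  have key : ∑ i : Fin (m+3), (if PP B i.castSucc.succ then cc (m := m) i.castSucc.succ else 0)
      ≤ (if B (-1) ∨ B (-2) then 1/2 else 1) := by
    by_cases hex : ∃ i : Fin (m+3), PP B i.castSucc.succ
    · obtain ⟨i, hi⟩ := hex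
      have mem : ∀ j : Fin (m+5), i.val + 1 < j.val → (B j ↔ j.val = i.val + 2) := by
        intro j hj
        have hlt : i.castSucc.succ < j := by rw [Fin.lt_def]; simpa using hj
        rw [hi j hlt, cyc_adj hlt]
        simp
      have huniq : ∀ i' : Fin (m+3), PP B i'.castSucc.succ → i' = i := by
        intro i' hi'
        have mem' : ∀ j : Fin (m+5), i'.val + 1 < j.val → (B j ↔ j.val = i'.val + 2) := by
          intro j hj
          have hlt : i'.castSucc.succ < j := by rw [Fin.lt_def]; simpa using hj
          rw [hi' j hlt, cyc_adj hlt]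
          simp
        have a1 := i.2
        have a2 := i'.2
        rcases lt_trichotomy i.val i'.val with h | h | h
        · have b1 := mem ⟨i'.val+2, by omega⟩ (by simp; omega)
          have b2 := mem' ⟨i'.val+2, by omega⟩ (by simp)
          rw [b1] at b2
          simp at b2; omega
        · exact Fin.ext h.symm
        · have b1 := mem ⟨i.val+2, by omega⟩ (by simp)
          have b2 := mem' ⟨i.val+2, by omega⟩ (by simp; omega)
          rw [b1] at b2
          simp at b2; omega
      rw [Finset.sum_eq_single i]
      · rw [if_pos hi]
        have a1 := i.2
        rw [← last_eq, ← last_eq']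
        split_ifs with hB
        · have : i.val = m+2 ∨ i.val = m+1 := by
            rcases hB with hB | hB
            · rw [mem _ (by simp only []; omega)] at hB
              simp only [] at hB; omega
            · by_cases hc : i.val = m+2
              · exact Or.inl hc
              rw [mem _ (by simp; omega)] at hB
              simp at hB; omega
          unfold cc
          simp
          rw [if_neg (by omega), if_pos (by omega)]
        · unfold cc
          split_ifs
          · rw [div_le_one (by positivity)]; linarith [(Nat.cast_nonneg m : (0:ℝ) ≤ m)]
          · norm_num
          · norm_num
      · intro j _ hj
        rw [if_neg]
        exact fun h => hj (huniq j h)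
      · simp
    · push Not at hex
      rw [Finset.sum_eq_zero]
      · split_ifs <;> norm_num
      · intro i _
        rw [if_neg (hex i)]
  linarith

lemma PP_zero {B : Fin (m+5) → Prop} (h : PP B 0) : B 1 ∧ B (-1) ∧ ∀ j, B j → j = 0 ∨ j = 1 ∨ j = -1 := by
  have key : ∀ j : Fin (m+5), j ≠ 0 → (B j ↔ (j = 1 ∨ j = -1)) := by
    intro j hj
    have hlt : 0 < j := Fin.pos_iff_ne_zero.2 hj
    rw [h j hlt, cyc_adj hlt, ← last_eq]
    simp [Fin.ext_iff]
  refine ⟨(key 1 one_ne).2 (Or.inl rfl), (key (-1) (by simp)).2 (Or.inr rfl), fun j hj => ?_⟩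
  by_cases h0 : j = 0
  · exact Or.inl h0
  · exact Or.inr ((key j h0).1 hj)

def EE (A : Fin (m+5) → Prop) (s : Fin (m+5)) : Prop :=
  A (s+1) ∧ A (s-1) ∧ ∀ j, A j → j = s ∨ j = s+1 ∨ j = s-1

lemma EE_of {A : Fin (m+5) → Prop} {s : Fin (m+5) × Bool} (h : PP (fun j => A (rot s j)) 0) :
    EE A s.1 := by
  obtain ⟨h1, h2, h3⟩ := PP_zero h
  rcases s with ⟨s, b⟩
  cases b
  · simp only [rot] at h1 h2 h3
    simp at h1 h2 h3
    refine ⟨h2, h1, fun j hj => ?_⟩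
    rcases h3 (s - j) (by simpa using hj) with h | h | h
    · left; linear_combination -h
    · right; right; linear_combination -h
    · right; left; linear_combination -h
  · simp only [rot] at h1 h2 h3
    simp at h1 h2 h3
    refine ⟨h1, by simpa [sub_eq_add_neg] using h2, fun j hj => ?_⟩
    rcases h3 (j - s) (by simpa using hj) with h | h | h
    · left; linear_combination h
    · right; left; linear_combination h
    · right; right; linear_combination h

lemma EE_unique {A : Fin (m+5) → Prop} {s t : Fin (m+5)} (hs : EE A s) (ht : EE A t) : s = t := by
  obtain ⟨_, _, h⟩ := hs
  obtain ⟨h1, h2, _⟩ := ht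
  have n1 := one_ne (m := m)
  have n2 := two_ne (m := m)
  have n3 := three_ne (m := m)
  have n4 := four_ne (m := m)
  rcases h _ h1 with a | a | a <;> rcases h _ h2 with b | b | b
  · exact absurd (by linear_combination a - b) n2
  · exact absurd (by linear_combination a - b) n3
  · exact absurd (by linear_combination a - b) n1
  · linear_combination -a
  · linear_combination -a
  · linear_combination -a
  · exact absurd (by linear_combination a - b) n3
  · exact absurd (by linear_combination a - b) n4
  · exact absurd (by linear_combination a - b) n2

lemma rot_inj_left {s t : Fin (m+5) × Bool} (h : ∀ i, rot s i = rot t i) : s = t := by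
  rcases s with ⟨s, b⟩
  rcases t with ⟨t, c⟩
  have h0 := h 0
  have h1 := h 1
  have n2 := two_ne (m := m)
  cases b <;> cases c <;> simp [rot] at h0 h1 ⊢
  · exact h0
  · exact n2 (by linear_combination h0 - h1)
  · exact n2 (by linear_combination h1 - h0)
  · exact h0

def rotIso (s : Fin (m+5) × Bool) :
    SimpleGraph.cycleGraph (m+5) ≃g SimpleGraph.cycleGraph (m+5) where
  toFun := rot s
  invFun i := if s.2 then i - s.1 else s.1 - i
  left_inv i := by rcases s with ⟨s, b⟩; cases b <;> simp [rot]
  right_inv i := by rcases s with ⟨s, b⟩; cases b <;> simp [rot]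
  map_rel_iff' := by
    intro a b
    rcases s with ⟨s, c⟩
    simp only [Equiv.coe_fn_mk, SimpleGraph.cycleGraph_adj]
    cases c <;> simp [rot]
    exact or_comm

open Classical in
lemma tot (A : Fin (m+5) → Prop) :
    ∑ s : Fin (m+5) × Bool, ∑ i, (if PP (fun j => A (rot s j)) i then cc i else 0)
      ≤ 2 * (m+5 : ℝ) := by
  have hk : (0:ℝ) < m + 5 := by positivity
  have n1 := one_ne (m := m)
  have n2 := two_ne (m := m)
  have n3 := three_ne (m := m)
  by_cases hA : ∃ a, A a
  · obtain ⟨a, ha⟩ := hA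
    refine le_trans (Finset.sum_le_sum fun s _ => pt _) ?_
    set F : Fin (m+5) × Bool → Prop := fun s => A (rot s (-1)) ∨ A (rot s (-2)) with hF
    have e1 : ∀ s : Fin (m+5) × Bool, (if A (rot s (-1)) ∨ A (rot s (-2)) then (1/2 : ℝ) else 1)
        = 1 - (1/2) * (if F s then 1 else 0) := by
      intro s; simp only [hF]; split_ifs <;> norm_num
    simp only [e1]
    rw [Finset.sum_add_distrib, Finset.sum_add_distrib, Finset.sum_sub_distrib, ← Finset.mul_sum,
      Finset.sum_boole, Finset.sum_boole]
    simp only [Finset.sum_const, Finset.card_univ, Fintype.card_prod, Fintype.card_fin,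
      Fintype.card_bool, nsmul_eq_mul]
    push_cast
    have e2 : ((m:ℝ)+5) * 2 * (1/(m+5)) = 2 := by field_simp
    rw [e2]
    by_cases hE : ∃ s, EE A s
    · obtain ⟨t, ht⟩ := hE
      have c1 : (univ.filter fun s : Fin (m+5) × Bool => PP (fun j => A (rot s j)) 0).card ≤ 2 := by
        refine le_trans (Finset.card_le_card (t := {(t, true), (t, false)}) ?_) Finset.card_le_two
        rintro ⟨s, b⟩ hs
        have := EE_unique (EE_of (mem_filter.1 hs).2) ht
        simp only at this
        subst this
        cases b <;> simp
      have c2 : 8 ≤ (univ.filter fun s : Fin (m+5) × Bool => F s).card := by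
        have : ({(t, true), (t+1, true), (t+2, true), (t+3, true),
          (t, false), (t-1, false), (t-2, false), (t-3, false)} : Finset (Fin (m+5) × Bool)).card = 8 := by
          have n12 : (1 : Fin (m+5)) ≠ 2 := fun h => n1 (by linear_combination -h)
          have n13 : (1 : Fin (m+5)) ≠ 3 := fun h => n2 (by linear_combination -h)
          have n23 : (2 : Fin (m+5)) ≠ 3 := fun h => n1 (by linear_combination -h)
          repeat rw [Finset.card_insert_of_notMem]
          all_goals simp [n2, n3, n12, n13, n23, sub_eq_add_neg]
        rw [← this]
        obtain ⟨h1, h2, -⟩ := ht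
        apply Finset.card_le_card
        intro x hx
        simp only [mem_insert, mem_singleton] at hx
        simp only [mem_filter, mem_univ, true_and, hF]
        rcases hx with rfl | rfl | rfl | rfl | rfl | rfl | rfl | rfl <;> simp only [rot]
        · left; convert h2 using 1 <;> simp; ring
        · right; convert h2 using 1 <;> simp; ring
        · left; convert h1 using 1 <;> simp; ring
        · right; convert h1 using 1 <;> simp; ring
        · left; convert h1 using 1 <;> simp
        · right; convert h1 using 1 <;> simp; ring
        · left; convert h2 using 1 <;> simp; ring
        · right; convert h2 using 1 <;> simp; ring
      have c1' : ((univ.filter fun s : Fin (m+5) × Bool => PP (fun j => A (rot s j)) 0).card : ℝ) ≤ 2 := by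
        exact_mod_cast c1
      have c2' : (8:ℝ) ≤ (univ.filter fun s : Fin (m+5) × Bool => F s).card := by
        exact_mod_cast c2
      linarith
    · have c1 : (univ.filter fun s : Fin (m+5) × Bool => PP (fun j => A (rot s j)) 0).card = 0 := by
        rw [Finset.card_eq_zero, Finset.filter_eq_empty_iff]
        intro s _ hs
        exact hE ⟨_, EE_of hs⟩
      have c2 : 4 ≤ (univ.filter fun s : Fin (m+5) × Bool => F s).card := by
        have : ({(a+1, true), (a+2, true), (a-1, false), (a-2, false)}
            : Finset (Fin (m+5) × Bool)).card = 4 := by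
          have n12 : (1 : Fin (m+5)) ≠ 2 := fun h => n1 (by linear_combination -h)
          repeat rw [Finset.card_insert_of_notMem]
          all_goals simp [n12, sub_eq_add_neg]
        refine this.symm.le.trans (Finset.card_le_card ?_)
        intro x hx
        simp only [mem_insert, mem_singleton] at hx
        simp only [mem_filter, mem_univ, true_and, hF]
        rcases hx with rfl | rfl | rfl | rfl <;> simp only [rot]
        · left; convert ha using 1; simp
        · right; convert ha using 1; simp
        · left; convert ha using 1; simp
        · right; convert ha using 1; simp
      have c2' : (4:ℝ) ≤ (univ.filter fun s : Fin (m+5) × Bool => F s).card := by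
        exact_mod_cast c2
      rw [c1]
      push_cast
      linarith
  · push Not at hA
    have : ∀ s : Fin (m+5) × Bool, ∑ i, (if PP (fun j => A (rot s j)) i then cc i else 0) ≤ 1 := by
      intro s
      rw [Fin.sum_univ_castSucc, Finset.sum_eq_zero]
      · split_ifs
        · simp only [cc, Fin.val_last, if_true]
          rw [zero_add, div_le_one hk]
          linarith [(Nat.cast_nonneg m : (0:ℝ) ≤ m)]
        · norm_num
      · intro i _
        rw [if_neg]
        intro h
        have hlt : i.castSucc < i.succ := Fin.castSucc_lt_succ
        have := (h i.succ hlt).2 ((cyc_adj hlt).2 (by left; simp))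
        exact hA _ this
    refine le_trans (Finset.sum_le_sum fun s _ => this s) ?_
    simp
    linarith

end

open Classical in
lemma per_emb {V : Type} [Fintype V] (G : SimpleGraph V) (m : ℕ)
    (φ : SimpleGraph.cycleGraph (m+5) ↪g G) :
    2 * (m+5 : ℝ) * ((m+5 : ℝ) ^ (m+5) / (4 * (m+5) * (Fintype.card V : ℝ) ^ (m+5))) ≤
    ∑ s : Fin (m+5) × Bool,
      ∏ i, ((Cd G (SimpleGraph.cycleGraph (m+5)).Adj i (fun j => φ (rot s j))).card : ℝ)⁻¹ := by
  set n : ℝ := (Fintype.card V : ℝ) with hn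
  have hn0 : 0 < n := by
    have : Nonempty V := ⟨φ 0⟩
    rw [hn]
    exact_mod_cast Fintype.card_pos
  have hk : (0:ℝ) < m + 5 := by positivity
  set S : Fin (m+5) × Bool → Fin (m+5) → ℝ := fun s i =>
    ((Cd G (SimpleGraph.cycleGraph (m+5)).Adj i (fun j => φ (rot s j))).card : ℝ) with hS
  have hSpos : ∀ s i, 0 < S s i := by
    intro s i
    simp only [hS]
    rw [Nat.cast_pos, Finset.card_pos]
    refine ⟨φ (rot s i), ?_⟩
    simp only [Cd, mem_filter, mem_univ, true_and]
    intro j _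
    rw [φ.map_adj_iff]
    exact (rotIso s).map_adj_iff
  have hsum : ∑ s, ∑ i, cc i * S s i ≤ 2 * (m+5) * n := by
    have e : ∀ s i, cc i * S s i = ∑ v : V,
        (if PP (fun j => G.Adj v (φ (rot s j))) i then cc i else 0) := by
      intro s i
      rw [← Finset.sum_filter, Finset.sum_const, nsmul_eq_mul, mul_comm]
      simp only [hS, Cd]
      congr 3
      ext x
      rw [mem_filter, mem_filter]
      rfl
    simp only [e]
    calc _ = ∑ v : V, ∑ s, ∑ i, (if PP (fun j => G.Adj v (φ (rot s j))) i then cc i else 0) := by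
          symm
          rw [Finset.sum_comm]
          refine Finset.sum_congr rfl fun s _ => ?_
          rw [Finset.sum_comm]
      _ ≤ ∑ v : V, 2 * (m+5 : ℝ) := Finset.sum_le_sum fun v _ => tot (fun a => G.Adj v (φ a))
      _ = _ := by simp [hn]; ring
  have hbound : ∀ s, (m+5 : ℝ) ^ (m+5) / (4 * (m+5) * n ^ (m+5)) *
      (1 + ∑ i, (1 - (m+5)/n * (cc i * S s i))) ≤ ∏ i, (S s i)⁻¹ := by
    intro s
    have e : ∏ i, (S s i)⁻¹ = (m+5 : ℝ) ^ (m+5) / (4 * (m+5) * n ^ (m+5)) *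
        ∏ i, ((m+5)/n * (cc i * S s i))⁻¹ := by
      simp only [mul_inv, Finset.prod_mul_distrib, Finset.prod_inv_distrib, cc_prod]
      simp
      field_simp
    rw [e]
    refine mul_le_mul_of_nonneg_left ?_ (by positivity)
    calc _ ≤ Real.exp (∑ i, (1 - (m+5)/n * (cc i * S s i))) := by
          rw [add_comm]; exact Real.add_one_le_exp _
      _ = ∏ i, Real.exp (1 - (m+5)/n * (cc i * S s i)) := Real.exp_sum _ _
      _ ≤ _ := by
        refine Finset.prod_le_prod (fun i _ => (Real.exp_pos _).le) fun i _ => ?_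
        have hy : 0 < (m+5)/n * (cc i * S s i) := by
          have := cc_pos i
          have := hSpos s i
          positivity
        rw [← Real.exp_log hy, ← Real.exp_neg, Real.exp_le_exp, Real.exp_log hy]
        linarith [Real.log_le_sub_one_of_pos hy]
  refine le_trans ?_ (Finset.sum_le_sum fun s _ => hbound s)
  rw [← Finset.mul_sum, mul_comm]
  refine mul_le_mul_of_nonneg_left ?_ (by positivity)
  simp only [Finset.sum_add_distrib, Finset.sum_sub_distrib, ← Finset.mul_sum]
  simp only [Finset.sum_const, Finset.card_univ, Fintype.card_prod, Fintype.card_fin,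
      Fintype.card_bool, nsmul_eq_mul]
  push_cast
  have : (m+5 : ℝ)/n * ∑ s, ∑ i, cc i * S s i ≤ (m+5)/n * (2 * (m+5) * n) :=
    mul_le_mul_of_nonneg_left hsum (by positivity)
  have e : (m+5 : ℝ)/n * (2 * (m+5) * n) = 2 * (m+5) * (m+5) := by field_simp
  linarith

theorem inducedCycleCount_le {V : Type} [Fintype V] (G : SimpleGraph V) (n k : ℕ)
    (hn : Fintype.card V = n) (hk : 5 ≤ k) :
    (Nat.card {S : Set V // Nonempty (G.induce S ≃g SimpleGraph.cycleGraph k)} : ℝ)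
      ≤ 2 * n ^ k / k ^ k := by
  classical
  obtain ⟨m, rfl⟩ : ∃ m, k = m + 5 := ⟨k - 5, by omega⟩
  set E := SimpleGraph.cycleGraph (m+5) ↪g G
  have : Finite E := Finite.of_injective (fun φ : E => (φ : Fin (m+5) → V)) DFunLike.coe_injective
  have : Fintype E := Fintype.ofFinite E
  set T := {S : Set V // Nonempty (G.induce S ≃g SimpleGraph.cycleGraph (m+5))}
  set w : (Fin (m+5) → V) → ℝ := fun f =>
    ∏ i, ((Cd G (SimpleGraph.cycleGraph (m+5)).Adj i f).card : ℝ)⁻¹ with hw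
  have h1 : ∑ φ : E, w φ ≤ 1 := by
    refine le_trans ?_ (sum_wt G (m+5) (SimpleGraph.cycleGraph (m+5)).Adj)
    have hinj : Function.Injective (fun φ : E => (φ : Fin (m+5) → V)) := DFunLike.coe_injective
    refine le_trans (Finset.sum_map univ ⟨_, hinj⟩ w).symm.le ?_
    refine le_trans (Finset.sum_le_sum (fun f hf => ?_)) (Finset.sum_le_sum_of_subset_of_nonneg
      (Finset.subset_univ _) (fun f _ _ => Finset.prod_nonneg fun i _ => by positivity))
    rw [Finset.mem_map] at hf
    obtain ⟨φ, -, rfl⟩ := hf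
    refine le_of_eq (Finset.prod_congr rfl fun i _ => ?_)
    rw [if_pos]
    simp only [Cd, mem_filter, mem_univ, true_and]
    intro j _
    exact φ.map_adj_iff
  have h2 : ∀ s : Fin (m+5) × Bool, ∑ φ : E, w (fun j => φ (rot s j)) = ∑ φ : E, w φ := by
    intro s
    let e : E ≃ E :=
      { toFun := fun φ => φ.comp (rotIso s).toEmbedding
        invFun := fun φ => φ.comp (rotIso s).symm.toEmbedding
        left_inv := by intro φ; ext i; simp
        right_inv := by intro φ; ext i; simp }
    exact e.sum_comp (fun φ : E => w φ)
  have h3 : (Fintype.card E : ℝ) * (2 * (m+5 : ℝ) * ((m+5 : ℝ) ^ (m+5) / (4 * (m+5) * (n : ℝ) ^ (m+5))))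
      ≤ 2 * (m+5) := by
    calc _ = ∑ φ : E, (2 * (m+5 : ℝ) * ((m+5 : ℝ) ^ (m+5) / (4 * (m+5) * (n : ℝ) ^ (m+5)))) := by
          simp
      _ ≤ ∑ φ : E, ∑ s : Fin (m+5) × Bool, w (fun j => φ (rot s j)) := by
          refine Finset.sum_le_sum fun φ _ => ?_
          rw [← hn]
          exact per_emb G m φ
      _ = ∑ s : Fin (m+5) × Bool, ∑ φ : E, w φ := by
          rw [Finset.sum_comm]
          exact Finset.sum_congr rfl fun s _ => h2 s
      _ ≤ ∑ s : Fin (m+5) × Bool, 1 := Finset.sum_le_sum fun s _ => h1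
      _ = _ := by simp; ring
  have h4 : Nat.card T * (2 * (m+5)) ≤ Fintype.card E := by
    let em : ∀ S : T, E := fun S =>
      (SimpleGraph.Embedding.induce S.1).comp (Classical.choice S.2).symm.toEmbedding
    have hem : ∀ S : T, Set.range (em S) = S.1 := by
      intro S
      ext v
      constructor
      · rintro ⟨i, rfl⟩
        exact ((Classical.choice S.2).symm i).2
      · intro hv
        refine ⟨Classical.choice S.2 ⟨v, hv⟩, ?_⟩
        change ((Classical.choice S.2).symm (Classical.choice S.2 ⟨v, hv⟩)).1 = v
        rw [RelIso.symm_apply_apply]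
    have hinj : Function.Injective (fun p : T × (Fin (m+5) × Bool) =>
        ((em p.1).comp (rotIso p.2).toEmbedding : E)) := by
      rintro ⟨S, s⟩ ⟨S', s'⟩ h
      have hf : ∀ i, em S (rot s i) = em S' (rot s' i) := fun i => DFunLike.congr_fun h i
      have hr : ∀ (S : T) s, Set.range (fun i => em S (rot s i)) = S.1 := by
        intro S s
        rw [← hem S]
        exact (rotIso s).surjective.range_comp (em S)
      have hSS : S = S' := by
        apply Subtype.ext
        rw [← hr S s, ← hr S' s']
        exact congrArg Set.range (funext hf)
      subst hSS
      have : s = s' := rot_inj_left fun i => (em S).injective (hf i)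
      rw [this]
    have := Nat.card_le_card_of_injective _ hinj
    rw [Nat.card_prod, Nat.card_eq_fintype_card (α := E)] at this
    rw [Nat.card_prod, Nat.card_eq_fintype_card (α := Bool), Nat.card_eq_fintype_card (α := Fin _),
      Fintype.card_fin, Fintype.card_bool] at this
    linarith
  rcases Nat.eq_zero_or_pos (Fintype.card E) with h0 | h0
  · have : Nat.card T = 0 := by
      rw [h0] at h4
      have := Nat.eq_zero_of_le_zero h4
      simpa using this
    rw [this]
    push_cast
    positivity
  · obtain ⟨φ⟩ := Fintype.card_pos_iff.1 h0
    have hn0 : (0:ℝ) < n := by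
      have : Nonempty V := ⟨φ 0⟩
      rw [← hn]
      exact_mod_cast Fintype.card_pos
    have h4' : (Nat.card T : ℝ) * (2 * (m+5)) ≤ Fintype.card E := by exact_mod_cast h4
    have hk : (0:ℝ) < m + 5 := by positivity
    have h5 := le_trans (mul_le_mul_of_nonneg_right h4' (by positivity)) h3
    push_cast
    rw [le_div_iff₀ (by positivity)]
    have e : (Nat.card T : ℝ) * (2 * (m+5)) * (2 * (m+5 : ℝ) * ((m+5 : ℝ) ^ (m+5) / (4 * (m+5) * (n : ℝ) ^ (m+5))))
      = (2 * (m+5)) * ((Nat.card T : ℝ) * (m+5 : ℝ) ^ (m+5) / (2 * (n:ℝ)^(m+5))) := by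
      field_simp; norm_num
    rw [e] at h5
    have h6 := le_of_mul_le_mul_left (h5.trans_eq (mul_one _).symm) (by positivity)
    rw [div_le_one (by positivity)] at h6
    exact h6
end

section
/- For every integer k ≥ 5, the inducibility of the cycle C_k satisfies ind(C_k) ≤ 2·k!/k^k; equivalently, for every ε > 0 there exists N such that for all n ≥ N, every n-vertex graph G satisfies i(C_k, G) ≤ (2 + ε)·k!/k^k. -/
open Finset Classical in
theorem wsum {V : Type} [Fintype V] (A : ∀ m : ℕ, (Fin m → V) → Finset V) (k : ℕ) :
    ∑ f : Fin k → V, ∏ i : Fin k,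
      (if f i ∈ A i (fun j => f (Fin.castLE i.2.le j)) then
        (1:ℝ) / ((A i (fun j => f (Fin.castLE i.2.le j))).card : ℝ) else 0) ≤ 1 := by
  induction k with
  | zero => simp
  | succ k ih =>
    rw [← (Fin.snocEquiv (fun _ : Fin (k+1) => V)).sum_comp, Fintype.sum_prod_type, Finset.sum_comm]
    refine le_trans (Finset.sum_le_sum fun g _ => ?_) ih
    simp only [Fin.prod_univ_castSucc]
    have h1 : ∀ x : V, ∀ i : Fin k, (Fin.snocEquiv (fun _ : Fin (k+1) => V)) (x, g) i.castSucc = g i := by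
      intro x i; simp [Fin.snocEquiv]
    have h2 : ∀ x : V, (Fin.snocEquiv (fun _ : Fin (k+1) => V)) (x, g) (Fin.last k) = x := by
      intro x; simp [Fin.snocEquiv]
    have h3 : ∀ x : V, ∀ i : Fin k, (fun j : Fin (i.castSucc : Fin (k+1)) => (Fin.snocEquiv (fun _ : Fin (k+1) => V)) (x, g) (Fin.castLE i.castSucc.2.le j)) = fun j : Fin i => g (Fin.castLE i.2.le j) := by
      intro x i; funext j
      exact h1 x (Fin.castLE i.2.le j)
    have h4 : ∀ x : V, (fun j : Fin (Fin.last k : Fin (k+1)) => (Fin.snocEquiv (fun _ : Fin (k+1) => V)) (x, g) (Fin.castLE (Fin.last k).2.le j)) = g := by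
      intro x; funext j
      exact h1 x j
    simp only [h1, h2]
    have h5 : ∀ x : V, (A (Fin.last k : Fin (k+1)) (fun j : Fin (Fin.last k : Fin (k+1)) => (Fin.snocEquiv (fun _ : Fin (k+1) => V)) (x, g) (Fin.castLE (Fin.last k).2.le j))) = A k g := by
      intro x; rw [h4]; rfl
    have h6 : ∀ x : V, ∀ i : Fin k, (A (i.castSucc : Fin (k+1)) (fun j : Fin (i.castSucc : Fin (k+1)) => (Fin.snocEquiv (fun _ : Fin (k+1) => V)) (x, g) (Fin.castLE i.castSucc.2.le j))) = A i (fun j : Fin i => g (Fin.castLE i.2.le j)) := by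
      intro x i; rw [h3]; rfl
    simp only [h5, h6]
    rw [← Finset.mul_sum]
    apply mul_le_of_le_one_right
    · apply Finset.prod_nonneg; intro i _; split_ifs <;> positivity
    · rw [← Finset.sum_filter]
      simp only [Finset.filter_univ_mem, Finset.sum_const, nsmul_eq_mul, mul_one_div]
      exact div_self_le_one _

theorem zcast_eq {k : ℕ} {a b : ℕ} (h : a ≤ b) (h2 : b < a + k) : ((a : ZMod k) = b) ↔ a = b := by
  constructor
  · intro h3
    rw [ZMod.natCast_eq_natCast_iff] at h3
    have := (Nat.modEq_iff_dvd' h).1 h3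
    have := Nat.eq_zero_of_dvd_of_lt this (by omega)
    omega
  · rintro rfl; rfl

theorem cyc_iff {k : ℕ} (hk : 5 ≤ k) {j m : ℕ} (h : j < m) (h2 : m < k) :
    (((j : ZMod k) - m = 1 ∨ (m : ZMod k) - j = 1)) ↔ (j + 1 = m ∨ (j = 0 ∧ m + 1 = k)) := by
  have e1 : ((m : ZMod k) - j = 1) ↔ j + 1 = m := by
    rw [← zcast_eq (k := k) (a := j + 1) (b := m) (by omega) (by omega)]
    push_cast
    constructor
    · intro h; rw [← h]; ring
    · intro h; rw [← h]; ring
  have e2 : ((j : ZMod k) - m = 1) ↔ (j = 0 ∧ m + 1 = k) := by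
    have : ((j : ZMod k) - m = 1) ↔ (((m+1 : ℕ) : ZMod k) = ((j + k : ℕ) : ZMod k)) := by
      push_cast
      rw [ZMod.natCast_self]
      constructor
      · intro h; rw [← h]; ring
      · intro h
        have : (j : ZMod k) = m + 1 := by rw [h]; ring
        rw [this]; ring
    rw [this]
    rw [zcast_eq (by omega) (by omega)]
    omega
  rw [e1, e2]; tauto

noncomputable def cw (m : ℕ) : ℝ := if m ≤ 2 then 1/2 else 1

open Finset Classical in
theorem combB {k : ℕ} (hk : 5 ≤ k) (Q : ℕ → Prop) :
    (∑ m ∈ Ico 1 (k-1), if ∀ j < m, (Q j ↔ j + 1 = m) then cw m else 0) ≤ 1 ∧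
    ((Q 0 ∨ Q 1) → (∑ m ∈ Ico 1 (k-1), if ∀ j < m, (Q j ↔ j + 1 = m) then cw m else 0) ≤ 1/2) := by
  by_cases h : ∃ m ∈ Ico 1 (k-1), ∀ j < m, (Q j ↔ j + 1 = m)
  · obtain ⟨m, hm, hQ⟩ := h
    rw [Finset.mem_Ico] at hm
    have : (∑ m ∈ Ico 1 (k-1), if ∀ j < m, (Q j ↔ j + 1 = m) then cw m else 0) = cw m := by
      rw [Finset.sum_eq_single m]
      · rw [if_pos hQ]
      · intro b hb hne
        rw [Finset.mem_Ico] at hb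
        rw [if_neg]
        intro hb2
        have a1 := hQ (b-1)
        have a2 := hb2 (b-1) (by omega)
        have a3 := hQ (m-1) (by omega)
        have a4 := hb2 (m-1)
        have : Q (b-1) := a2.2 (by omega)
        have : Q (m-1) := a3.2 (by omega)
        rcases lt_or_gt_of_ne hne with h | h
        · have := (a1 (by omega)).1 ‹_›; omega
        · have := (a4 (by omega)).1 ‹_›; omega
      · intro h; exact absurd (Finset.mem_Ico.2 hm) h
    rw [this]
    constructor
    · unfold cw; split_ifs <;> norm_num
    · intro h
      have : m ≤ 2 := by
        by_contra hc
        rcases h with h | h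
        · have := (hQ 0 (by omega)).1 h; omega
        · have := (hQ 1 (by omega)).1 h; omega
      unfold cw; rw [if_pos this]
  · have : (∑ m ∈ Ico 1 (k-1), if ∀ j < m, (Q j ↔ j + 1 = m) then cw m else 0) = 0 := by
      apply Finset.sum_eq_zero
      intro m hm
      rw [if_neg]; intro h2; exact h ⟨m, hm, h2⟩
    rw [this]; norm_num

open Finset Classical in
theorem comb {k : ℕ} [NeZero k] (hk : 5 ≤ k) (P : ZMod k → Prop) :
    (∑ s : ZMod k, ∑ m ∈ Ico 1 k,
      if ∀ j < m, (P (s + (j : ℕ)) ↔ ((j : ZMod k) - m = 1 ∨ (m : ZMod k) - j = 1)) then cw m else 0)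
      ≤ (k : ℝ) - 1 := by
  set B : ZMod k → ℝ := fun s => ∑ m ∈ Ico 1 (k-1), if ∀ j < m, (P (s + (j:ℕ)) ↔ j + 1 = m) then cw m else 0 with hB
  set X : ZMod k → Prop := fun s => P s ∧ P (s - 2) ∧ ∀ j : ℕ, 1 ≤ j → j < k - 2 → ¬ P (s + j) with hX
  have k2 : ((k - 2 : ℕ) : ZMod k) = -2 := by
    rw [Nat.cast_sub (by omega)]; simp
  have hsplit : ∀ s : ZMod k, (∑ m ∈ Ico 1 k,
      if ∀ j < m, (P (s + (j : ℕ)) ↔ ((j : ZMod k) - m = 1 ∨ (m : ZMod k) - j = 1)) then cw m else 0)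
      ≤ B s + if X s then 1 else 0 := by
    intro s
    obtain ⟨K, rfl⟩ : ∃ K, k = K + 1 := ⟨k - 1, by omega⟩
    rw [Finset.sum_Ico_succ_top (by omega)]
    apply add_le_add
    · apply le_of_eq
      apply Finset.sum_congr (by simp)
      intro m hm
      rw [Finset.mem_Ico] at hm
      congr 1
      apply propext
      refine forall₂_congr fun j hj => ?_
      rw [cyc_iff hk hj (by omega)]
      have : (j + 1 = m ∨ j = 0 ∧ m + 1 = K + 1) ↔ j + 1 = m := by omega
      rw [this]
    · by_cases hc : ∀ j < K, (P (s + (j : ℕ)) ↔ ((j : ZMod (K+1)) - (K:ℕ) = 1 ∨ ((K : ℕ) : ZMod (K+1)) - j = 1))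
      · rw [if_pos hc, if_pos]
        · unfold cw; split_ifs <;> norm_num
        · have hc' : ∀ j < K, (P (s + (j : ℕ)) ↔ (j + 1 = K ∨ j = 0)) := by
            intro j hj
            rw [hc j hj, cyc_iff hk hj (by omega)]
            simp
          refine ⟨?_, ?_, ?_⟩
          · have := (hc' 0 (by omega)).2 (by omega)
            simpa using this
          · have := (hc' (K + 1 - 2) (by omega)).2 (by omega)
            rw [k2] at this
            simpa [sub_eq_add_neg] using this
          · intro j h1 h2 h3
            have := (hc' j (by omega)).1 h3
            omega
      · rw [if_neg hc]; split_ifs <;> norm_num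
  have hB1 : ∀ s, B s ≤ 1 := fun s => (combB hk (fun j => P (s + (j:ℕ)))).1
  have hB2 : ∀ s, P s ∨ P (s+1) → B s ≤ 1/2 := by
    intro s h
    apply (combB hk (fun j => P (s + (j:ℕ)))).2
    simpa using h
  refine le_trans (Finset.sum_le_sum fun s _ => hsplit s) ?_
  have key : ∀ T : Finset (ZMod k), (∀ s ∈ T, B s ≤ 1/2) → ∑ s, B s ≤ k - (T.card : ℝ)/2 := by
    intro T hT
    have : ∑ s, B s ≤ ∑ s : ZMod k, (1 - if s ∈ T then (1/2 : ℝ) else 0) := by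
      apply Finset.sum_le_sum
      intro s _
      split_ifs with h
      · linarith [hT s h]
      · linarith [hB1 s]
    rw [Finset.sum_sub_distrib] at this
    simp [ZMod.card] at this
    linarith
  have nz : ∀ a : ℕ, 0 < a → a < 5 → ((a : ℕ) : ZMod k) ≠ 0 := by
    intro a h1 h2 h3
    have := (zcast_eq (k := k) (a := 0) (b := a) (by omega) (by omega)).1 (by simpa using h3.symm)
    omega
  have n1 : (1 : ZMod k) ≠ 0 := by simpa using nz 1 (by omega) (by omega)
  have n2 : (2 : ZMod k) ≠ 0 := by simpa using nz 2 (by omega) (by omega)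
  have n3 : (3 : ZMod k) ≠ 0 := by simpa using nz 3 (by omega) (by omega)
  rw [Finset.sum_add_distrib]
  by_cases hx : ∃ s, X s
  · obtain ⟨s, hs⟩ := hx
    obtain ⟨p1, p2, p3⟩ := id hs
    have huniq : ∀ t, X t → t = s := by
      rintro t ⟨q1, q2, q3⟩
      by_contra hne
      obtain ⟨j, hj, rfl⟩ : ∃ j : ℕ, j < k ∧ t = s + j :=
        ⟨(t - s).val, ZMod.val_lt _, by simp⟩
      have hj0 : j ≠ 0 := by rintro rfl; simp at hne
      have : ¬ (j < k - 2) := fun h => p3 j (by omega) h q1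
      apply q3 (k - j) (by omega) (by omega)
      rw [Nat.cast_sub hj.le]
      simpa using p1
    have hsum : (∑ t : ZMod k, if X t then (1:ℝ) else 0) ≤ 1 := by
      rw [Finset.sum_eq_single s]
      · split_ifs <;> norm_num
      · intro b _ hb; rw [if_neg]; intro h; exact hb (huniq b h)
      · simp
    have hT := key {s, s - 1, s - 2, s - 3} (by
      intro t ht
      simp only [Finset.mem_insert, Finset.mem_singleton] at ht
      apply hB2
      rcases ht with rfl | rfl | rfl | rfl
      · exact Or.inl p1
      · right; simpa using p1
      · exact Or.inl p2
      · right; convert p2 using 1; ring)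
    have hcard : ({s, s - 1, s - 2, s - 3} : Finset (ZMod k)).card = 4 := by
      rw [Finset.card_insert_of_notMem, Finset.card_insert_of_notMem, Finset.card_insert_of_notMem, Finset.card_singleton]
      · simp only [Finset.mem_singleton]
        intro h; apply n1; linear_combination h
      · simp only [Finset.mem_singleton, Finset.mem_insert, not_or]
        exact ⟨fun h => n1 (by linear_combination h), fun h => n2 (by linear_combination h)⟩
      · simp only [Finset.mem_singleton, Finset.mem_insert, not_or]
        exact ⟨fun h => n1 (by linear_combination h), fun h => n2 (by linear_combination h), fun h => n3 (by linear_combination h)⟩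
    rw [hcard] at hT
    push_cast at hT
    linarith
  · have hsum : (∑ t : ZMod k, if X t then (1:ℝ) else 0) = 0 := by
      apply Finset.sum_eq_zero
      intro t _
      rw [if_neg]; intro h; exact hx ⟨t, h⟩
    rw [hsum]
    by_cases hp : ∃ t, P t
    · obtain ⟨t, ht⟩ := hp
      have hT := key {t, t-1} (by
        intro x hx
        simp only [Finset.mem_insert, Finset.mem_singleton] at hx
        apply hB2
        rcases hx with rfl | rfl
        · exact Or.inl ht
        · right; simpa using ht)
      rw [Finset.card_pair (fun h => n1 (by linear_combination h))] at hT
      push_cast at hT; linarith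
    · have : ∑ s, B s = 0 := by
        apply Finset.sum_eq_zero
        intro s _
        apply Finset.sum_eq_zero
        intro m hm
        rw [Finset.mem_Ico] at hm
        rw [if_neg]
        intro h
        exact hp ⟨_, (h (m-1) (by omega)).2 (by omega)⟩
      rw [this]
      have : (5:ℝ) ≤ k := by exact_mod_cast hk
      linarith

open Finset Classical in
noncomputable def cand {V : Type} [Fintype V] (G : SimpleGraph V) (k m : ℕ) (f : ℕ → V) : Finset V :=
  univ.filter fun u => ∀ j < m, (G.Adj (f j) u ↔ ((j : ZMod k) - m = 1 ∨ (m : ZMod k) - j = 1))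

def IsCyc {V : Type} (G : SimpleGraph V) (k : ℕ) (φ : ZMod k → V) : Prop :=
  ∀ a b, G.Adj (φ a) (φ b) ↔ (a - b = 1 ∨ b - a = 1)

theorem mem_cand {V : Type} [Fintype V] {G : SimpleGraph V} {k : ℕ} {φ : ZMod k → V}
    (h : IsCyc G k φ) (s : ZMod k) (m : ℕ) : φ (s + m) ∈ cand G k m (fun j => φ (s + j)) := by
  simp only [cand, Finset.mem_filter, Finset.mem_univ, true_and]
  intro j _
  rw [h]
  simp

open Finset Classical in
theorem wsum2 {V : Type} [Fintype V] (G : SimpleGraph V) (k : ℕ) [NeZero k] (s : ZMod k) :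
    ∑ φ ∈ univ.filter (fun φ : ZMod k → V => IsCyc G k φ),
      ∏ m ∈ range k, (1:ℝ) / ((cand G k m (fun j => φ (s + j))).card : ℝ) ≤ 1 := by
  let A : ∀ m : ℕ, (Fin m → V) → Finset V := fun m f =>
    univ.filter fun u => ∀ j : Fin m, (G.Adj (f j) u ↔ (((j : ℕ) : ZMod k) - m = 1 ∨ (m : ZMod k) - (j : ℕ) = 1))
  refine le_trans ?_ (wsum A k)
  let r : (ZMod k → V) → (Fin k → V) := fun φ j => φ (s + (j : ℕ))
  have hr : Function.Injective r := by
    intro φ ψ h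
    funext x
    have := congrFun h ⟨(x - s).val, ZMod.val_lt _⟩
    simpa [r] using this
  have hA : ∀ φ : ZMod k → V, ∀ i : Fin k, A i (fun j => r φ (Fin.castLE i.2.le j)) = cand G k i (fun j => φ (s + j)) := by
    intro φ i
    ext u
    simp only [A, cand, r, Finset.mem_filter, Finset.mem_univ, true_and]
    constructor
    · intro h j hj; exact h ⟨j, hj⟩
    · intro h j; exact h j j.2
  have e1 : ∑ φ ∈ univ.filter (fun φ : ZMod k → V => IsCyc G k φ),
      ∏ m ∈ range k, (1:ℝ) / ((cand G k m (fun j => φ (s + j))).card : ℝ) =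
     ∑ f ∈ (univ.filter (fun φ : ZMod k → V => IsCyc G k φ)).image r, ∏ i : Fin k,
      (if f i ∈ A i (fun j => f (Fin.castLE i.2.le j)) then
        (1:ℝ) / ((A i (fun j => f (Fin.castLE i.2.le j))).card : ℝ) else 0) := by
    rw [Finset.sum_image (fun a _ b _ h => hr h)]
    apply Finset.sum_congr rfl
    intro φ hφ
    rw [Finset.mem_filter] at hφ
    rw [Finset.prod_range]
    apply Finset.prod_congr rfl
    intro i _
    rw [hA, if_pos (mem_cand hφ.2 s i)]
  rw [e1]
  apply Finset.sum_le_sum_of_subset_of_nonneg (Finset.subset_univ _)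
  intro f _ _
  apply Finset.prod_nonneg; intro i _; split_ifs <;> positivity

theorem prod_inv_ge {ι : Type} (T : Finset ι) (y : ι → ℝ) (hy : ∀ i ∈ T, 0 < y i) :
    1 - ∑ i ∈ T, (y i - 1) ≤ ∏ i ∈ T, 1 / y i := by
  have h1 : ∏ i ∈ T, y i ≤ Real.exp (∑ i ∈ T, (y i - 1)) := by
    rw [Real.exp_sum]
    apply Finset.prod_le_prod
    · intro i hi; exact (hy i hi).le
    · intro i hi; have := Real.add_one_le_exp (y i - 1); linarith
  have h0 : 0 < ∏ i ∈ T, y i := Finset.prod_pos hy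
  have h2 : Real.exp (-∑ i ∈ T, (y i - 1)) ≤ ∏ i ∈ T, 1 / y i := by
    rw [Real.exp_neg, Finset.prod_div_distrib, Finset.prod_const_one, one_div]
    exact inv_anti₀ h0 h1
  have := Real.add_one_le_exp (-∑ i ∈ T, (y i - 1))
  linarith

theorem cw_pos (m : ℕ) : 0 < cw m := by unfold cw; split_ifs <;> norm_num

theorem cw_prod {k : ℕ} (hk : 5 ≤ k) : ∏ m ∈ Finset.Ico 1 k, cw m = 1/4 := by
  rw [← Finset.prod_Ico_consecutive _ (show 1 ≤ 3 by omega) (show 3 ≤ k by omega)]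
  rw [Finset.prod_eq_one (s := Finset.Ico 3 k)]
  · rw [Finset.prod_Ico_succ_top (by omega), Finset.prod_Ico_succ_top (by omega)]
    norm_num [cw]
  · intro m hm
    rw [Finset.mem_Ico] at hm
    unfold cw; rw [if_neg (by omega)]

open Finset Classical in
theorem cand_sum {V : Type} [Fintype V] (G : SimpleGraph V) {k : ℕ} [NeZero k] (hk : 5 ≤ k)
    (φ : ZMod k → V) :
    ∑ s : ZMod k, ∑ m ∈ Ico 1 k, cw m * ((cand G k m (fun j => φ (s + j))).card : ℝ)
      ≤ (Fintype.card V : ℝ) * (k - 1) := by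
  have : ∑ s : ZMod k, ∑ m ∈ Ico 1 k, cw m * ((cand G k m (fun j => φ (s + j))).card : ℝ)
     = ∑ u : V, ∑ s : ZMod k, ∑ m ∈ Ico 1 k,
      if ∀ j < m, (G.Adj (φ (s + (j : ℕ))) u ↔ ((j : ZMod k) - m = 1 ∨ (m : ZMod k) - j = 1)) then cw m else 0 := by
    rw [Finset.sum_comm]
    conv_rhs => rw [Finset.sum_comm]
    rw [Finset.sum_comm]
    apply Finset.sum_congr rfl; intro s _
    conv_rhs => rw [Finset.sum_comm]
    apply Finset.sum_congr rfl; intro m _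
    rw [← Finset.sum_filter, Finset.sum_const, nsmul_eq_mul, mul_comm]
    rfl
  rw [this]
  refine le_trans (Finset.sum_le_sum fun u _ => comb hk (fun x => G.Adj (φ x) u)) ?_
  rw [Finset.sum_const, nsmul_eq_mul, Finset.card_univ]

open Finset Classical in
theorem main_bound {V : Type} [Fintype V] (G : SimpleGraph V) {k : ℕ} [NeZero k] (hk : 5 ≤ k) :
    ((univ.filter (fun φ : ZMod k → V => IsCyc G k φ)).card : ℝ) * (k:ℝ)^(k-1) ≤ 4 * (Fintype.card V : ℝ)^k := by
  set E := univ.filter (fun φ : ZMod k → V => IsCyc G k φ) with hE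
  set n : ℝ := (Fintype.card V : ℝ) with hn
  rcases E.eq_empty_or_nonempty with h | ⟨φ₀, _⟩
  · rw [h]; simp; positivity
  have hn0 : 0 < n := by
    have : 0 < Fintype.card V := Fintype.card_pos_iff.2 ⟨φ₀ 0⟩
    rw [hn]; exact Nat.cast_pos.2 this
  have hk0 : (0:ℝ) < k := by exact_mod_cast (show 0 < k by omega)
  have step : ∀ φ ∈ E, (1/n) * ((k/n)^(k-1) / 4 * k) ≤
      ∑ s : ZMod k, ∏ m ∈ range k, (1:ℝ) / ((cand G k m (fun j => φ (s + j))).card : ℝ) := by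
    intro φ hφ
    have hφ' : IsCyc G k φ := (Finset.mem_filter.1 hφ).2
    set N : ZMod k → ℕ → ℝ := fun s m => ((cand G k m (fun j => φ (s + j))).card : ℝ) with hN
    have hNpos : ∀ s m, 0 < N s m := by
      intro s m
      have : 0 < (cand G k m (fun j => φ (s + j))).card := Finset.card_pos.2 ⟨_, mem_cand hφ' s m⟩
      exact Nat.cast_pos.2 this
    have hN0 : ∀ s, N s 0 = n := by intro s; simp [hN, cand, hn]
    have hp : ∀ s, ∏ m ∈ range k, 1 / N s m = (1/n) * ((k/n)^(k-1) / 4 * ∏ m ∈ Ico 1 k, 1 / (cw m * N s m * (k/n))) := by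
      intro s
      rw [Finset.range_eq_Ico, Finset.prod_eq_prod_Ico_succ_bot (by omega), hN0]
      congr 1
      simp only [Finset.prod_div_distrib, Finset.prod_mul_distrib, Finset.prod_const_one, Finset.prod_const, Nat.card_Ico, zero_add]
      rw [cw_prod hk]
      have : ∏ m ∈ Ico 1 k, N s m ≠ 0 := Finset.prod_ne_zero_iff.2 fun m _ => (hNpos s m).ne'
      rw [div_pow]
      field_simp
    change _ ≤ ∑ s : ZMod k, ∏ m ∈ range k, 1 / N s m
    rw [Finset.sum_congr rfl fun s _ => hp s]
    rw [← Finset.mul_sum, ← Finset.mul_sum]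
    gcongr
    have h1 : ∑ s : ZMod k, (1 - ∑ m ∈ Ico 1 k, (cw m * N s m * (k/n) - 1)) ≤ ∑ s : ZMod k, ∏ m ∈ Ico 1 k, 1 / (cw m * N s m * (k/n)) := by
      apply Finset.sum_le_sum
      intro s _
      apply prod_inv_ge
      intro m _
      have := hNpos s m
      have := cw_pos m
      positivity
    refine le_trans ?_ h1
    simp only [Finset.sum_sub_distrib, ← Finset.sum_mul]
    have h2 := cand_sum G hk φ
    simp only [Finset.sum_const, Finset.card_univ, ZMod.card, Nat.card_Ico, nsmul_eq_mul, mul_one]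
    rw [Nat.cast_sub (by omega)]
    have h3 : (∑ s : ZMod k, ∑ m ∈ Ico 1 k, cw m * N s m) * (k/n) ≤ (n * (k-1)) * (k/n) := by
      gcongr
    have h4 : (n * ((k:ℝ)-1)) * (k/n) = k * (k-1) := by field_simp
    push_cast
    linarith
  have tot : (E.card : ℝ) * ((1/n) * ((k/n)^(k-1) / 4 * k)) ≤ k := by
    calc _ = ∑ φ ∈ E, ((1/n) * ((k/n)^(k-1) / 4 * k)) := by simp
      _ ≤ _ := Finset.sum_le_sum step
      _ = _ := Finset.sum_comm
      _ ≤ ∑ s : ZMod k, 1 := Finset.sum_le_sum fun s _ => wsum2 G k s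
      _ = k := by simp [ZMod.card]
  obtain ⟨K, rfl⟩ : ∃ K, k = K + 1 := ⟨k - 1, by omega⟩
  simp only [Nat.add_sub_cancel] at tot ⊢
  rw [div_pow] at tot
  have e : (E.card : ℝ) * ((1/n) * (((K+1:ℕ):ℝ)^K / n^K / 4 * ((K+1:ℕ):ℝ))) = (E.card * ((K+1:ℕ):ℝ)^K) / (4 * n^(K+1)) * ((K+1:ℕ):ℝ) := by
    rw [pow_succ n K]
    field_simp
  rw [e] at tot
  have t2 : (E.card * ((K+1:ℕ):ℝ)^K) / (4 * n^(K+1)) ≤ 1 := by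
    by_contra hc
    push Not at hc
    nlinarith
  rwa [div_le_one (by positivity)] at t2

open Finset Classical in
theorem copies_le {V : Type} [Fintype V] (G : SimpleGraph V) {k : ℕ} [NeZero k] (hk : 5 ≤ k) :
    2 * k * Nat.card {S : Set V // Nonempty (G.induce S ≃g SimpleGraph.cycleGraph k)} ≤
      (univ.filter (fun φ : ZMod k → V => IsCyc G k φ)).card := by
  have hc : ∀ S : {S : Set V // Nonempty (G.induce S ≃g SimpleGraph.cycleGraph k)},
      ∃ φ : ZMod k → V, IsCyc G k φ ∧ Set.range φ = S.1 ∧ Function.Injective φ := by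
    rintro ⟨S, ⟨e⟩⟩
    obtain ⟨K, rfl⟩ : ∃ K, k = K + 2 := ⟨k - 2, by omega⟩
    refine ⟨fun x : Fin (K+2) => (e.symm x : V), ?_, ?_, ?_⟩
    · have key : ∀ a b : Fin (K+2), G.Adj (e.symm a : V) (e.symm b : V) ↔ (a - b = 1 ∨ b - a = 1) := by
        intro a b
        have : G.Adj (e.symm a : V) (e.symm b : V) ↔ (SimpleGraph.cycleGraph (K+2)).Adj a b :=
          e.symm.map_adj_iff (v := a) (w := b)
        rw [this, SimpleGraph.cycleGraph_adj]
      exact key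
    · ext x
      constructor
      · rintro ⟨y, rfl⟩; exact (e.symm y).2
      · intro hx; exact ⟨e ⟨x, hx⟩, by simp⟩
    · intro a b h
      exact e.symm.injective (Subtype.ext h)
  choose Φ h1 h2 h3 using hc
  have n2 : (2 : ZMod k) ≠ 0 := by
    intro h
    have := (zcast_eq (k := k) (a := 0) (b := 2) (by omega) (by omega)).1 (by simpa using h.symm)
    omega
  let sg : Bool → ZMod k := fun b => if b then 1 else -1
  have sgs : ∀ b, sg b = 1 ∨ sg b = -1 := by intro b; cases b <;> simp [sg]
  have hsg : Function.Injective sg := by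
    intro a b
    cases a <;> cases b <;> simp [sg]
    · intro h; apply n2; linear_combination -h
    · intro h; apply n2; linear_combination h
  let F : (Bool × ZMod k) × {S : Set V // Nonempty (G.induce S ≃g SimpleGraph.cycleGraph k)} →
    {φ : ZMod k → V // IsCyc G k φ} := fun p => ⟨fun x => Φ p.2 (p.1.2 + sg p.1.1 * x), by
      intro a b
      rw [h1]
      rcases sgs p.1.1 with h | h <;> rw [h]
      · simp
      · simp only [add_sub_add_left_eq_sub]
        rw [or_comm]
        have e1 : ∀ x y : ZMod k, -1 * x - -1 * y = y - x := by intros; ring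
        rw [e1, e1]⟩
  have hF : Function.Injective F := by
    rintro ⟨⟨b, s⟩, S⟩ ⟨⟨b', s'⟩, S'⟩ h
    have h : ∀ x, Φ S (s + sg b * x) = Φ S' (s' + sg b' * x) := fun x => congrFun (congrArg Subtype.val h) x
    have rng : ∀ (b : Bool) (s : ZMod k) S, Set.range (fun x => Φ S (s + sg b * x)) = S.1 := by
      intro b s S
      rw [← h2 S]
      ext v
      constructor
      · rintro ⟨x, rfl⟩; exact ⟨_, rfl⟩
      · rintro ⟨x, rfl⟩
        refine ⟨sg b * (x - s), ?_⟩
        have : s + sg b * (sg b * (x - s)) = x := by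
          rcases sgs b with h | h <;> rw [h] <;> ring
        simp only [this]
    have hS : S = S' := by
      apply Subtype.ext
      rw [← rng b s S, ← rng b' s' S']
      congr 1
      funext x; exact h x
    subst hS
    have h' : ∀ x, s + sg b * x = s' + sg b' * x := fun x => h3 S (h x)
    have hs : s = s' := by simpa using h' 0
    subst hs
    have hb : b = b' := hsg (by simpa using h' 1)
    subst hb
    rfl
  have := Nat.card_le_card_of_injective F hF
  rw [Nat.card_prod, Nat.card_prod] at this
  simp only [Nat.card_eq_fintype_card (α := Bool), Fintype.card_bool, Nat.card_zmod] at this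
  refine le_trans this (le_of_eq ?_)
  rw [Nat.card_eq_fintype_card, Fintype.card_subtype]

theorem lim_aux (k : ℕ) (hk : 5 ≤ k) (ε : ℝ) (hε : 0 < ε) :
    ∃ N : ℕ, ∀ n : ℕ, N ≤ n → 0 < n.choose k ∧
      2 * (n:ℝ)^k ≤ (2 + ε) * (Nat.factorial k) * (n.choose k) := by
  have hr : Filter.Tendsto (fun n : ℕ => (n : ℝ) * (1 / (n : ℝ))) Filter.atTop (nhds 1) := by
    apply tendsto_const_nhds.congr'
    filter_upwards [Filter.eventually_gt_atTop 0] with n hn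
    have : (n : ℝ) ≠ 0 := by exact_mod_cast hn.ne'
    field_simp
  have h := ProbabilityTheory.tendsto_choose_mul_pow_atTop k hr
  have hf : (0:ℝ) < (k.factorial : ℝ) := by exact_mod_cast k.factorial_pos
  have hlt : 2 / ((2 + ε) * (k.factorial : ℝ)) < 1 ^ k / (k.factorial : ℝ) := by
    rw [one_pow, div_lt_div_iff₀ (by positivity) hf]
    nlinarith
  have h2 := h.eventually_const_lt hlt
  obtain ⟨N, hN⟩ := Filter.eventually_atTop.1 (h2.and (Filter.eventually_ge_atTop k))
  refine ⟨N, fun n hn => ?_⟩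
  obtain ⟨b1, b2⟩ := hN n hn
  refine ⟨Nat.choose_pos b2, ?_⟩
  have n0 : (0:ℝ) < (n:ℝ)^k := by
    have : (0:ℝ) < n := by exact_mod_cast (show 0 < n by omega)
    positivity
  rw [one_div, inv_pow, ← div_eq_mul_inv, div_lt_div_iff₀ (by positivity) n0] at b1
  linarith

/-- For every integer `k ≥ 5`, the inducibility of the cycle `C_k` is at most
`2 · k! / k^k`: for every `ε > 0` there exists `N` such that for all `n ≥ N`, every `n`-vertex
graph `G` satisfies `i(C_k, G) ≤ (2 + ε) · k! / k^k`, where `i(C_k, G)` is the number of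
induced copies of `C_k` in `G` divided by `(n choose k)`. -/
theorem inducibility_cycle_le (k : ℕ) (hk : 5 ≤ k) (ε : ℝ) (hε : 0 < ε) :
    ∃ N : ℕ, ∀ n : ℕ, N ≤ n → ∀ (V : Type) [Fintype V], Fintype.card V = n →
      ∀ G : SimpleGraph V,
        (Nat.card {S : Set V // Nonempty (G.induce S ≃g SimpleGraph.cycleGraph k)} : ℝ)
            / (n.choose k)
          ≤ (2 + ε) * (Nat.factorial k) / k ^ k := by
  classical
  obtain ⟨N, hN⟩ := lim_aux k hk ε hε
  refine ⟨N, fun n hn V _ hV G => ?_⟩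
  obtain ⟨c0, hc⟩ := hN n hn
  have : NeZero k := ⟨by omega⟩
  have a1 := main_bound G hk
  have a2 := copies_le G hk
  rw [hV] at a1
  have a2' := (Nat.cast_le (α := ℝ)).2 a2
  rw [Nat.cast_mul, Nat.cast_mul, Nat.cast_ofNat] at a2'
  set M : ℝ := (Nat.card {S : Set V // Nonempty (G.induce S ≃g SimpleGraph.cycleGraph k)} : ℝ)
  have hk0 : (0:ℝ) < k := by exact_mod_cast (show 0 < k by omega)
  have c0' : (0:ℝ) < n.choose k := by exact_mod_cast c0
  rw [div_le_div_iff₀ c0' (by positivity)]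
  refine le_trans ?_ hc
  have a3 := mul_le_mul_of_nonneg_right a2' (show (0:ℝ) ≤ (k:ℝ)^(k-1) by positivity)
  have a4 : (k:ℝ)^k = k * (k:ℝ)^(k-1) := by
    rw [← pow_succ']; congr 1; omega
  have a5 := le_trans a3 a1
  rw [a4]
  linarith
end

section
/- Let G be a graph on n vertices, k ≥ 5 an integer, and let v_1 v_2 ⋯ v_k be an induced cycle of length k in G. For j = 1, ..., k, let D_j be the good k-tuple (v_j, v_{j−1}, v_{j+1}, v_{j+2}, ..., v_{j+k−2}), indices taken modulo k. Then w(D_1) + w(D_2) + ⋯ + w(D_k) ≥ k^k/(4 n^k). -/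
open Finset
open scoped Classical

/-- Index transposition swapping 0 and 1. -/
def swap01 (i : ℕ) : ℕ := if i = 0 then 1 else if i = 1 then 0 else i

/-- `y 0, y 1, …, y (k-1)` is an induced cycle of length `k` in `G`. -/
def IsInducedCycle {V : Type*} (G : SimpleGraph V) (k : ℕ) (y : ℕ → V) : Prop :=
  (∀ i < k, ∀ j < k, y i = y j → i = j) ∧
  ∀ i < k, ∀ j < k, (G.Adj (y i) (y j) ↔ (i + 1) % k = j ∨ (j + 1) % k = i)

/-- `y 0, y 1, …, y (m-1)` is an induced path on `m` vertices in `G`. -/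
def IsInducedPath {V : Type*} (G : SimpleGraph V) (m : ℕ) (y : ℕ → V) : Prop :=
  (∀ i < m, ∀ j < m, y i = y j → i = j) ∧
  ∀ i < m, ∀ j < m, (G.Adj (y i) (y j) ↔ i + 1 = j ∨ j + 1 = i)

/-- `(z 0, …, z (k-1))` is a good k-tuple: `z 1, z 0, z 2, …, z (k-1)` is an induced cycle. -/
def IsGoodTuple {V : Type*} (G : SimpleGraph V) (k : ℕ) (z : ℕ → V) : Prop :=
  IsInducedCycle G k (fun i => z (swap01 i))

/-- The sequence `z 1, z 0, z 2, …, z (i-2), x` of length `i`. -/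
def extSeq {V : Type*} (z : ℕ → V) (i : ℕ) (x : V) : ℕ → V :=
  fun p => if p = i - 1 then x else z (swap01 p)

/-- The quantity `n_i` associated with the (prefix of the) tuple `z`. -/
noncomputable def nq {V : Type*} (G : SimpleGraph V) (k : ℕ) (z : ℕ → V) (i : ℕ) : ℕ :=
  if i = 1 then Nat.card V
  else if i = 2 then Nat.card {x : V // G.Adj (z 0) x}
  else if i = 3 then Nat.card {x : V // G.Adj (z 0) x ∧ ¬ G.Adj (z 1) x}
  else if i < k then Nat.card {x : V // IsInducedPath G i (extSeq z i x)}
  else Nat.card {x : V // IsInducedCycle G k (extSeq z k x)}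

/-- The weight `w(D) = ∏_{i=1}^k 1/n_i` of a tuple. -/
noncomputable def wt {V : Type*} (G : SimpleGraph V) (k : ℕ) (z : ℕ → V) : ℝ :=
  ∏ i ∈ Finset.Icc 1 k, ((nq G k z i : ℝ))⁻¹

/-- View a `Fin k`-tuple as an `ℕ`-indexed tuple. -/
def tupFun {V : Type*} {k : ℕ} (hk : 0 < k) (z : Fin k → V) : ℕ → V :=
  fun i => z ⟨i % k, Nat.mod_lt i hk⟩

/-- The good tuple `D_j = (v_j, v_{j-1}, v_{j+1}, …, v_{j+k-2})` (0-indexed `j`, indices mod `k`). -/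
def Dtup {V : Type*} (k : ℕ) (v : ℕ → V) (j : ℕ) : ℕ → V :=
  fun p => if p = 0 then v (j % k)
    else if p = 1 then v ((j + k - 1) % k)
    else v ((j + p - 1) % k)


lemma amgm_aux {ι : Type*} (s : Finset ι) (hs : s.Nonempty) (z : ι → ℝ) (hz : ∀ i ∈ s, 0 ≤ z i) :
    ∏ i ∈ s, z i ≤ ((∑ i ∈ s, z i) / (s.card : ℝ)) ^ s.card := by
  have hc : (0 : ℝ) < s.card := by exact_mod_cast hs.card_pos
  have h := Real.geom_mean_le_arith_mean s (fun _ => 1) z (fun _ _ => zero_le_one)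
    (by simpa using hc) hz
  simp only [Real.rpow_one, one_mul, Finset.sum_const, nsmul_eq_mul, mul_one] at h
  have h0 : 0 ≤ ∏ i ∈ s, z i := Finset.prod_nonneg hz
  calc ∏ i ∈ s, z i = ((∏ i ∈ s, z i) ^ ((s.card : ℝ)⁻¹)) ^ s.card :=
        (Real.rpow_inv_natCast_pow h0 hs.card_pos.ne').symm
    _ ≤ _ := pow_le_pow_left₀ (Real.rpow_nonneg h0 _) h _

lemma split_aux {M : Type*} [CommMonoid M] (k : ℕ) (hk : 5 ≤ k) (f : ℕ → M) :
    ∏ i ∈ Finset.Icc 2 k, f i = f 2 * (f 3 * (f k * ∏ i ∈ Finset.Ico 4 k, f i)) := by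
  have : Finset.Icc 2 k = insert 2 (insert 3 (insert k (Finset.Ico 4 k))) := by
    ext i; simp only [Finset.mem_Icc, Finset.mem_insert, Finset.mem_Ico]; omega
  rw [this, Finset.prod_insert, Finset.prod_insert, Finset.prod_insert]
  all_goals simp only [Finset.mem_insert, Finset.mem_Ico]; omega

lemma comb_aux (k : ℕ) [NeZero k] (hk : 5 ≤ k) (a : ZMod k → Prop) (P : ℕ → ZMod k → Prop)
    (C : ZMod k → Prop)
    (hP : ∀ i ∈ Finset.Ico 4 k, ∀ s, P i s → a (s + ((i - 2 : ℕ) : ZMod k)) ∧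
      ∀ m < i - 2, ¬ a (s + (m : ZMod k)))
    (hC : ∀ s, C s → a s ∧ a (s - 2) ∧ ∀ m : ℕ, 1 ≤ m → m ≤ k - 3 → ¬ a (s + (m : ZMod k))) :
    ∑ s : ZMod k, ((if a (s + 1) then (1 : ℝ) else 0) / 2
      + ((if a (s + 1) ∧ ¬ a s then (1 : ℝ) else 0) / 2
      + ((if C s then (1 : ℝ) else 0) + ∑ i ∈ Finset.Ico 4 k, if P i s then (1 : ℝ) else 0)))
      ≤ (k : ℝ) - 1 := by
  have hkR : (5 : ℝ) ≤ k := by exact_mod_cast hk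
  by_cases hA : ∃ t, a t
  swap
  · push Not at hA
    have hP' : ∀ i ∈ Finset.Ico 4 k, ∀ s, ¬ P i s := fun i hi s h => hA _ (hP i hi s h).1
    have hC' : ∀ s, ¬ C s := fun s h => hA _ (hC s h).1
    rw [Finset.sum_eq_zero]
    · linarith
    · intro s _
      rw [Finset.sum_eq_zero (fun i hi => if_neg (hP' i hi s))]
      simp [hA, hC']
  have hshift : ∑ s : ZMod k, (if a (s + 1) then (1 : ℝ) else 0) / 2
      = ∑ s : ZMod k, (if a s then (1 : ℝ) else 0) / 2 :=
    Equiv.sum_comp (Equiv.addRight (1 : ZMod k)) (fun s => (if a s then (1 : ℝ) else 0) / 2)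
  rw [Finset.sum_add_distrib, hshift, ← Finset.sum_add_distrib]
  have hstep : ∀ s : ZMod k, (if a s then (1 : ℝ) else 0) / 2
      + ((if a (s + 1) ∧ ¬ a s then (1 : ℝ) else 0) / 2
      + ((if C s then (1 : ℝ) else 0) + ∑ i ∈ Finset.Ico 4 k, if P i s then (1 : ℝ) else 0))
      ≤ (1 - (if a s ∨ a (s + 1) then (1 : ℝ) else 0) / 2) + if C s then (1 : ℝ) else 0 := by
    intro s
    by_cases h : a s ∨ a (s + 1)
    · have : ∑ i ∈ Finset.Ico 4 k, (if P i s then (1 : ℝ) else 0) = 0 := by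
        refine Finset.sum_eq_zero (fun i hi => if_neg fun hp => ?_)
        have h1 := (hP i hi s hp).2
        have hi' := Finset.mem_Ico.1 hi
        rcases h with h | h
        · exact h1 0 (by omega) (by simpa using h)
        · exact h1 1 (by omega) (by simpa using h)
      rw [this]
      by_cases h0 : a s <;> by_cases h1 : a (s + 1) <;> simp [h0, h1] <;> norm_num
    · have : ∑ i ∈ Finset.Ico 4 k, (if P i s then (1 : ℝ) else 0) ≤ 1 := by
        rw [← Finset.sum_filter, Finset.sum_const, nsmul_eq_mul, mul_one]
        have : ((Finset.Ico 4 k).filter (fun i => P i s)).card ≤ 1 := by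
          rw [Finset.card_le_one]
          intro i hi j hj
          rw [Finset.mem_filter] at hi hj
          have h1 := hP i hi.1 s hi.2
          have h2 := hP j hj.1 s hj.2
          have hi' := Finset.mem_Ico.1 hi.1
          have hj' := Finset.mem_Ico.1 hj.1
          rcases lt_trichotomy i j with h | h | h
          · exact absurd h1.1 (h2.2 _ (by omega))
          · exact h
          · exact absurd h2.1 (h1.2 _ (by omega))
        exact_mod_cast this
      have h0 : ¬ a s := fun h' => h (Or.inl h')
      have h1 : ¬ a (s + 1) := fun h' => h (Or.inr h')
      simp only [h0, h1, if_false, false_and, or_self]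
      linarith
  refine (Finset.sum_le_sum (fun s _ => hstep s)).trans ?_
  rw [Finset.sum_add_distrib, Finset.sum_sub_distrib, ← Finset.sum_div]
  simp only [← Finset.sum_filter, Finset.sum_const, nsmul_eq_mul, mul_one, Finset.card_univ,
    ZMod.card]
  set T := Finset.univ.filter (fun s : ZMod k => a s ∨ a (s + 1)) with hT
  have ne : ∀ m : ℕ, 1 ≤ m → m ≤ 4 → (m : ZMod k) ≠ 0 := by
    intro m h1 h2 h
    rw [ZMod.natCast_eq_zero_iff] at h
    have := Nat.le_of_dvd (by omega) h
    omega
  have n1 : (1 : ZMod k) ≠ 0 := by simpa using ne 1 (by omega) (by omega)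
  have n2 : (2 : ZMod k) ≠ 0 := by simpa using ne 2 (by omega) (by omega)
  have n3 : (3 : ZMod k) ≠ 0 := by simpa using ne 3 (by omega) (by omega)
  by_cases hCe : ∃ s, C s
  · obtain ⟨s, hs⟩ := hCe
    obtain ⟨h1, h2, h3⟩ := hC s hs
    have kc : ∀ r : ℕ, r ≤ k → ((k - r : ℕ) : ZMod k) = - (r : ZMod k) := by
      intro r hr; rw [Nat.cast_sub hr]; simp
    have hm : ∀ t, a t → t = s ∨ t = s - 1 ∨ t = s - 2 := by
      intro t ht
      have hval : s + (((t - s).val : ℕ) : ZMod k) = t := by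
        rw [ZMod.natCast_zmod_val]; ring
      have hlt := ZMod.val_lt (t - s)
      by_contra hcon
      push Not at hcon
      have e0 : (t - s).val ≠ 0 := fun h => by
        rw [h] at hval; apply hcon.1; rw [← hval]; simp
      have e1 : (t - s).val ≠ k - 1 := fun h => by
        rw [h, kc 1 (by omega)] at hval; apply hcon.2.1; rw [← hval]; push_cast; ring
      have e2 : (t - s).val ≠ k - 2 := fun h => by
        rw [h, kc 2 (by omega)] at hval; apply hcon.2.2; rw [← hval]; push_cast; ring
      exact h3 (t - s).val (by omega) (by omega) (by rwa [hval])
    have hn4 : (4 : ZMod k) ≠ 0 := by simpa using ne 4 (by omega) (by omega)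
    have hCu : (Finset.univ.filter (fun s : ZMod k => C s)).card ≤ 1 := by
      have : Finset.univ.filter (fun s : ZMod k => C s) ⊆ {s} := by
        intro t ht
        rw [Finset.mem_filter] at ht
        rw [Finset.mem_singleton]
        obtain ⟨g1, g2, -⟩ := hC t ht.2
        rcases hm t g1 with h | h | h
        · exact h
        · exfalso
          subst h
          rcases hm _ g2 with h | h | h
          · exact n3 (by linear_combination -h)
          · exact n2 (by linear_combination -h)
          · exact n1 (by linear_combination -h)
        · exfalso
          subst h
          rcases hm _ g2 with h | h | h
          · exact hn4 (by linear_combination -h)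
          · exact n3 (by linear_combination -h)
          · exact n2 (by linear_combination -h)
      exact (Finset.card_le_card this).trans (by simp)
    have hT4 : 4 ≤ T.card := by
      have hsub : ({s, s - 1, s - 2, s - 3} : Finset (ZMod k)) ⊆ T := by
        intro t ht
        simp only [Finset.mem_insert, Finset.mem_singleton] at ht
        rw [hT, Finset.mem_filter]
        refine ⟨Finset.mem_univ _, ?_⟩
        rcases ht with rfl | rfl | rfl | rfl
        · exact Or.inl h1
        · right; rwa [sub_add_cancel]
        · exact Or.inl h2
        · right; convert h2 using 1; ring
      refine le_trans (le_of_eq ?_) (Finset.card_le_card hsub)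
      rw [Finset.card_insert_of_notMem, Finset.card_insert_of_notMem,
        Finset.card_insert_of_notMem, Finset.card_singleton]
      · simp only [Finset.mem_singleton]
        exact fun h => n1 (by linear_combination h)
      · simp only [Finset.mem_insert, Finset.mem_singleton]
        rintro (h | h)
        · exact n1 (by linear_combination h)
        · exact n2 (by linear_combination h)
      · simp only [Finset.mem_insert, Finset.mem_singleton]
        rintro (h | h | h)
        · exact n1 (by linear_combination h)
        · exact n2 (by linear_combination h)
        · exact n3 (by linear_combination h)
    have q1 : ((Finset.univ.filter (fun s : ZMod k => C s)).card : ℝ) ≤ 1 := by exact_mod_cast hCu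
    have q2 : (4 : ℝ) ≤ T.card := by exact_mod_cast hT4
    linarith
  · have : Finset.univ.filter (fun s : ZMod k => C s) = ∅ := by
      rw [Finset.filter_eq_empty_iff]; intro s _ h; exact hCe ⟨s, h⟩
    rw [this]
    obtain ⟨t, ht⟩ := hA
    have hT2 : 2 ≤ T.card := by
      have hsub : ({t, t - 1} : Finset (ZMod k)) ⊆ T := by
        intro r hr
        simp only [Finset.mem_insert, Finset.mem_singleton] at hr
        rw [hT, Finset.mem_filter]
        refine ⟨Finset.mem_univ _, ?_⟩
        rcases hr with rfl | rfl
        · exact Or.inl ht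
        · right; rwa [sub_add_cancel]
      refine le_trans (le_of_eq ?_) (Finset.card_le_card hsub)
      rw [Finset.card_insert_of_notMem, Finset.card_singleton]
      simp only [Finset.mem_singleton]
      exact fun h => n1 (by linear_combination h)
    have q2 : (2 : ℝ) ≤ T.card := by exact_mod_cast hT2
    simp only [Finset.card_empty, Nat.cast_zero]
    linarith

lemma analytic_aux (k : ℕ) (hk : 5 ≤ k) (n : ℝ) (hn : 0 < n) {ι : Type*} [Fintype ι]
    (hι : Fintype.card ι = k) (N : ℕ → ι → ℝ) (hpos : ∀ i ∈ Finset.Icc 2 k, ∀ s, 0 < N i s)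
    (hsum : ∑ s, (N 2 s / 2 + (N 3 s / 2 + (N k s + ∑ i ∈ Finset.Ico 4 k, N i s)))
      ≤ n * ((k : ℝ) - 1)) :
    (k : ℝ) ^ k / (4 * n ^ k) ≤ ∑ s, n⁻¹ * ∏ i ∈ Finset.Icc 2 k, (N i s)⁻¹ := by
  have hkR : (5 : ℝ) ≤ k := by exact_mod_cast hk
  have hk0 : (0 : ℝ) < k := by linarith
  obtain ⟨c, hc⟩ : ∃ c : ℕ → ℝ, c = fun i => if i = 2 ∨ i = 3 then 2 else 1 := ⟨_, rfl⟩
  have c2 : c 2 = 2 := by simp [hc]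
  have c3 : c 3 = 2 := by simp [hc]
  have ck : c k = 1 := by rw [hc]; exact if_neg (by omega)
  have ci : ∀ i ∈ Finset.Ico 4 k, c i = 1 := by
    intro i hi; rw [Finset.mem_Ico] at hi; rw [hc]; exact if_neg (by omega)
  have cpos : ∀ i, 0 < c i := by intro i; rw [hc]; dsimp only; split_ifs <;> norm_num
  have cprod : ∏ i ∈ Finset.Icc 2 k, c i = 4 := by
    rw [split_aux k hk, c2, c3, ck, Finset.prod_eq_one ci]; norm_num
  have hMpos : ∀ i ∈ Finset.Icc 2 k, ∀ s, 0 < N i s / c i :=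
    fun i hi s => div_pos (hpos i hi s) (cpos i)
  have hMsum : ∑ s, ∑ i ∈ Finset.Icc 2 k, N i s / c i ≤ n * ((k : ℝ) - 1) := by
    refine le_trans (le_of_eq (Finset.sum_congr rfl fun s _ => ?_)) hsum
    have := split_aux (M := Multiplicative ℝ) k hk
      (fun i => Multiplicative.ofAdd (N i s / c i))
    have h2 : ∑ i ∈ Finset.Icc 2 k, N i s / c i = N 2 s / c 2 + (N 3 s / c 3 + (N k s / c k +
      ∑ i ∈ Finset.Ico 4 k, N i s / c i)) := this
    rw [h2, c2, c3, ck, div_one]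
    congr 3
    exact Finset.sum_congr rfl fun i hi => by rw [ci i hi, div_one]
  have hne : (Finset.univ : Finset ι).Nonempty := by
    rw [← Finset.card_pos, Finset.card_univ, hι]; omega
  have hne2 : (Finset.Icc 2 k).Nonempty := ⟨2, by simp; omega⟩
  have hcard : ((Finset.univ : Finset ι) ×ˢ Finset.Icc 2 k).card = (k - 1) * k := by
    rw [Finset.card_product, Finset.card_univ, hι, Nat.card_Icc, mul_comm]; congr 1
  have hk1 : ((k - 1 : ℕ) : ℝ) = (k : ℝ) - 1 := by rw [Nat.cast_sub (by omega)]; simp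
  have hprod : ∏ s, ∏ i ∈ Finset.Icc 2 k, N i s / c i ≤ ((n / k) ^ (k - 1)) ^ k := by
    have h := amgm_aux ((Finset.univ : Finset ι) ×ˢ Finset.Icc 2 k) (hne.product hne2)
      (fun p => N p.2 p.1 / c p.2)
      (fun p hp => (hMpos p.2 (Finset.mem_product.1 hp).2 p.1).le)
    rw [Finset.prod_product, Finset.sum_product, hcard] at h
    refine h.trans ?_
    rw [← pow_mul]
    refine pow_le_pow_left₀ (div_nonneg (Finset.sum_nonneg fun s _ => Finset.sum_nonneg
      fun i hi => (hMpos i hi s).le) (by positivity)) ?_ _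
    rw [div_le_div_iff₀ (by rw [Nat.cast_mul, hk1]; exact mul_pos (by linarith) hk0) hk0,
      Nat.cast_mul, hk1]
    nlinarith
  have hw : ∀ s, n⁻¹ * ∏ i ∈ Finset.Icc 2 k, (N i s)⁻¹
      = (4 * n)⁻¹ * (∏ i ∈ Finset.Icc 2 k, N i s / c i)⁻¹ := by
    intro s
    rw [Finset.prod_div_distrib, cprod, Finset.prod_inv_distrib, mul_inv, inv_div]
    ring
  have hwpos : ∀ s, 0 < n⁻¹ * ∏ i ∈ Finset.Icc 2 k, (N i s)⁻¹ := fun s =>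
    mul_pos (inv_pos.2 hn) (Finset.prod_pos fun i hi => inv_pos.2 (hpos i hi s))
  have h1 := amgm_aux Finset.univ hne (fun s => n⁻¹ * ∏ i ∈ Finset.Icc 2 k, (N i s)⁻¹)
    (fun s _ => (hwpos s).le)
  rw [Finset.card_univ, hι] at h1
  have h2 : ((4 * n * (n / k) ^ (k - 1))⁻¹) ^ k
      ≤ ∏ s, n⁻¹ * ∏ i ∈ Finset.Icc 2 k, (N i s)⁻¹ := by
    simp only [hw]
    rw [Finset.prod_mul_distrib, Finset.prod_const, Finset.card_univ, hι, mul_inv, mul_pow,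
      Finset.prod_inv_distrib, inv_pow ((n / k) ^ (k - 1))]
    refine mul_le_mul_of_nonneg_left ?_ (by positivity)
    exact inv_anti₀ (Finset.prod_pos fun s _ => Finset.prod_pos fun i hi => hMpos i hi s) hprod
  have h3 := le_of_pow_le_pow_left₀ (by omega : k ≠ 0)
    (div_nonneg (Finset.sum_nonneg fun s _ => (hwpos s).le) hk0.le) (h2.trans h1)
  rw [le_div_iff₀ hk0] at h3
  refine le_trans (le_of_eq ?_) h3
  obtain ⟨m, rfl⟩ : ∃ m, k = m + 1 := ⟨k - 1, by omega⟩
  rw [Nat.add_sub_cancel, div_pow, pow_succ, pow_succ]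
  field_simp

lemma range_aux (k : ℕ) [NeZero k] (f : ℕ → ℝ) :
    ∑ j ∈ Finset.range k, f j = ∑ s : ZMod k, f (s + 1).val := by
  refine Eq.trans ?_ (Equiv.sum_comp (Equiv.addRight (1 : ZMod k)) (fun s => f s.val)).symm
  refine Finset.sum_bij' (fun j _ => (j : ZMod k)) (fun s _ => s.val) ?_ ?_ ?_ ?_ ?_
  · intros; exact Finset.mem_univ _
  · intro s _; exact Finset.mem_range.2 (ZMod.val_lt s)
  · intro j hj; exact ZMod.val_cast_of_lt (Finset.mem_range.1 hj)
  · intro s _; exact ZMod.natCast_zmod_val s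
  · intro j hj; rw [ZMod.val_cast_of_lt (Finset.mem_range.1 hj)]

lemma dtup_aux {V : Type*} (k : ℕ) [NeZero k] (hk : 5 ≤ k) (v : ℕ → V) (s : ZMod k) (p : ℕ) :
    Dtup k v (s + 1).val (swap01 p) = v (s + (p : ZMod k)).val := by
  unfold Dtup swap01
  have e : ∀ m : ℕ, (m : ZMod k) = s + p → v (m % k) = v (s + (p : ZMod k)).val := by
    intro m hm; rw [← hm, ZMod.val_natCast]
  by_cases h0 : p = 0
  · subst h0
    simp only [if_true, one_ne_zero, if_false]
    apply e
    rw [Nat.cast_sub (by omega)]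
    simp
  by_cases h1 : p = 1
  · subst h1
    simp only [if_true, one_ne_zero, if_false]
    apply e
    simp
  · simp only [h0, h1, if_false]
    apply e
    rw [Nat.cast_sub (by omega)]
    simp only [Nat.cast_add, ZMod.natCast_zmod_val]
    push_cast
    ring

lemma card_aux {V : Type} [Fintype V] (P : V → Prop) :
    ((Nat.card {x : V // P x} : ℕ) : ℝ) = ∑ x, if P x then (1 : ℝ) else 0 := by
  rw [← Finset.sum_filter, Finset.sum_const, nsmul_eq_mul, mul_one, Nat.card_eq_fintype_card,
    Fintype.card_subtype]

lemma card_pos_aux {V : Type} [Fintype V] (P : V → Prop) (h : ∃ x, P x) :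
    0 < Nat.card {x : V // P x} := by
  obtain ⟨x, hx⟩ := h
  have : Nonempty {x : V // P x} := ⟨⟨x, hx⟩⟩
  exact Nat.card_pos

lemma cast_eq_aux (k p q : ℕ) (hp : p < k) (hq : q < k) :
    ((p : ZMod k) = q) ↔ p = q := by
  rw [ZMod.natCast_eq_natCast_iff', Nat.mod_eq_of_lt hp, Nat.mod_eq_of_lt hq]

/-- Let `G` be a graph on `n` vertices, `k ≥ 5`, and `v 0, v 1, …, v (k-1)` an
induced cycle of length `k` in `G`. With `D_j = (v_j, v_{j-1}, v_{j+1}, …, v_{j+k-2})`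
(indices mod `k`), we have `w(D_1) + ⋯ + w(D_k) ≥ k^k / (4 n^k)`. -/
theorem sum_weights_of_cycle_ge {V : Type} [Fintype V] (G : SimpleGraph V) (n k : ℕ)
    (hn : Fintype.card V = n) (hk : 5 ≤ k) (v : ℕ → V) (hv : IsInducedCycle G k v) :
    (k : ℝ) ^ k / (4 * (n : ℝ) ^ k) ≤ ∑ j ∈ Finset.range k, wt G k (Dtup k v j) := by
  have : NeZero k := ⟨by omega⟩
  have hnpos : 0 < n := by rw [← hn]; exact Fintype.card_pos_iff.2 ⟨v 0⟩
  obtain ⟨u, hu⟩ : ∃ u : ZMod k → V, u = fun t => v t.val := ⟨_, rfl⟩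
  have hD : ∀ s p, Dtup k v (s + 1).val (swap01 p) = u (s + (p : ZMod k)) := by
    intro s p; rw [hu]; exact dtup_aux k hk v s p
  have hz0 : ∀ s, Dtup k v (s + 1).val 0 = u (s + 1) := by
    intro s; simpa [swap01] using hD s 1
  have hz1 : ∀ s, Dtup k v (s + 1).val 1 = u s := by
    intro s; simpa [swap01] using hD s 0
  have uinj : ∀ s t, u s = u t → s = t := by
    intro s t h; rw [hu] at h
    exact ZMod.val_injective k (hv.1 _ (ZMod.val_lt s) _ (ZMod.val_lt t) h)
  have uadj : ∀ s t, G.Adj (u s) (u t) ↔ s + 1 = t ∨ t + 1 = s := by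
    intro s t; rw [hu]
    have key : ∀ s t : ZMod k, (s.val + 1) % k = t.val ↔ s + 1 = t := by
      intro s t
      rw [← ZMod.val_natCast, (ZMod.val_injective k).eq_iff]
      simp
    rw [← key, ← key]
    exact hv.2 _ (ZMod.val_lt s) _ (ZMod.val_lt t)
  have hext : ∀ s i p x, extSeq (Dtup k v (s + 1).val) i x p
      = if p = i - 1 then x else u (s + (p : ZMod k)) := by
    intro s i p x; unfold extSeq; rw [hD]
  have hext' : ∀ s i p, extSeq (Dtup k v (s + 1).val) i (u (s + ((i - 1 : ℕ) : ZMod k))) p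
      = u (s + (p : ZMod k)) := by
    intro s i p; rw [hext]; split_ifs with h
    · rw [h]
    · rfl
  have hN2 : ∀ s, nq G k (Dtup k v (s + 1).val) 2 = Nat.card {x : V // G.Adj (u (s + 1)) x} := by
    intro s; simp [nq, hz0]
  have hN3 : ∀ s, nq G k (Dtup k v (s + 1).val) 3
      = Nat.card {x : V // G.Adj (u (s + 1)) x ∧ ¬ G.Adj (u s) x} := by
    intro s; simp [nq, hz0, hz1]
  have hNi : ∀ s : ZMod k, ∀ i ∈ Finset.Ico 4 k, nq G k (Dtup k v (s + 1).val) i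
      = Nat.card {x : V // IsInducedPath G i (extSeq (Dtup k v (s + 1).val) i x)} := by
    intro s i hi
    rw [Finset.mem_Ico] at hi
    unfold nq
    rw [if_neg (by omega), if_neg (by omega), if_neg (by omega), if_pos hi.2]
  have hNk : ∀ s : ZMod k, nq G k (Dtup k v (s + 1).val) k
      = Nat.card {x : V // IsInducedCycle G k (extSeq (Dtup k v (s + 1).val) k x)} := by
    intro s
    unfold nq
    rw [if_neg (by omega), if_neg (by omega), if_neg (by omega), if_neg (by omega)]
  have n2 : (2 : ZMod k) ≠ 0 := by
    have := (cast_eq_aux k 2 0 (by omega) (by omega)).not.2 (by omega)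
    simpa using this
  have n3 : (3 : ZMod k) ≠ 0 := by
    have := (cast_eq_aux k 3 0 (by omega) (by omega)).not.2 (by omega)
    simpa using this
  have n1 : (1 : ZMod k) ≠ 0 := by
    have := (cast_eq_aux k 1 0 (by omega) (by omega)).not.2 (by omega)
    simpa using this
  have hpos : ∀ i ∈ Finset.Icc 2 k, ∀ s : ZMod k,
      (0 : ℝ) < (nq G k (Dtup k v (s + 1).val) i : ℝ) := by
    intro i hi s
    rw [Finset.mem_Icc] at hi
    rw [Nat.cast_pos]
    by_cases h2 : i = 2
    · subst h2; rw [hN2]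
      exact card_pos_aux _ ⟨u s, (uadj _ _).2 (Or.inr rfl)⟩
    by_cases h3 : i = 3
    · subst h3; rw [hN3]
      refine card_pos_aux _ ⟨u (s + 1 + 1), (uadj _ _).2 (Or.inl rfl), ?_⟩
      rw [uadj]
      rintro (h | h)
      · exact n1 (by linear_combination -h)
      · exact n3 (by linear_combination h)
    by_cases hik : i = k
    · subst hik; rw [hNk]
      refine card_pos_aux _ ⟨u (s + ((i - 1 : ℕ) : ZMod i)), ?_, ?_⟩
      · intro p hp q hq h
        rw [hext', hext'] at h
        exact (cast_eq_aux i p q hp hq).1 (add_left_cancel (uinj _ _ h))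
      · intro p hp q hq
        rw [hext', hext', uadj]
        have key : ∀ p q : ℕ, p < i → q < i →
            (s + (p : ZMod i) + 1 = s + (q : ZMod i) ↔ (p + 1) % i = q) := by
          intro p q hp hq
          rw [add_assoc, add_right_inj, ← Nat.cast_succ, ZMod.natCast_eq_natCast_iff',
            Nat.mod_eq_of_lt hq]
        rw [key p q hp hq, key q p hq hp]
    · have hi' : i ∈ Finset.Ico 4 k := Finset.mem_Ico.2 (by omega)
      rw [hNi s i hi']
      refine card_pos_aux _ ⟨u (s + ((i - 1 : ℕ) : ZMod k)), ?_, ?_⟩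
      · intro p hp q hq h
        rw [hext', hext'] at h
        exact (cast_eq_aux k p q (by omega) (by omega)).1 (add_left_cancel (uinj _ _ h))
      · intro p hp q hq
        rw [hext', hext', uadj]
        have key : ∀ p q : ℕ, p < i → q < i →
            (s + (p : ZMod k) + 1 = s + (q : ZMod k) ↔ p + 1 = q) := by
          intro p q hp hq
          rw [add_assoc, add_right_inj, ← Nat.cast_succ]
          exact cast_eq_aux k _ _ (by omega) (by omega)
        rw [key p q hp hq, key q p hq hp]
  have hwt : ∀ s : ZMod k, wt G k (Dtup k v (s + 1).val)
      = (n : ℝ)⁻¹ * ∏ i ∈ Finset.Icc 2 k, ((nq G k (Dtup k v (s + 1).val) i : ℝ))⁻¹ := by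
    intro s
    unfold wt
    have : Finset.Icc 1 k = insert 1 (Finset.Icc 2 k) := by
      ext i; simp only [Finset.mem_Icc, Finset.mem_insert]; omega
    rw [this, Finset.prod_insert (by simp)]
    congr 2
    simp [nq, hn]
  rw [range_aux]
  simp only [hwt]
  refine analytic_aux k hk n (by exact_mod_cast hnpos) (ZMod.card k)
    (fun i s => (nq G k (Dtup k v (s + 1).val) i : ℝ)) hpos ?_
  have hrw : ∀ s : ZMod k, ((nq G k (Dtup k v (s + 1).val) 2 : ℝ) / 2
      + ((nq G k (Dtup k v (s + 1).val) 3 : ℝ) / 2 + ((nq G k (Dtup k v (s + 1).val) k : ℝ)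
      + ∑ i ∈ Finset.Ico 4 k, (nq G k (Dtup k v (s + 1).val) i : ℝ))))
      = ∑ x : V, ((if G.Adj (u (s + 1)) x then (1 : ℝ) else 0) / 2
      + ((if G.Adj (u (s + 1)) x ∧ ¬ G.Adj (u s) x then (1 : ℝ) else 0) / 2
      + ((if IsInducedCycle G k (extSeq (Dtup k v (s + 1).val) k x) then (1 : ℝ) else 0)
      + ∑ i ∈ Finset.Ico 4 k,
        if IsInducedPath G i (extSeq (Dtup k v (s + 1).val) i x) then (1 : ℝ) else 0))) := by
    intro s
    have h4 : ∑ i ∈ Finset.Ico 4 k, (nq G k (Dtup k v (s + 1).val) i : ℝ)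
        = ∑ x : V, ∑ i ∈ Finset.Ico 4 k,
        if IsInducedPath G i (extSeq (Dtup k v (s + 1).val) i x) then (1 : ℝ) else 0 := by
      rw [Finset.sum_comm]
      refine Finset.sum_congr rfl fun i hi => ?_
      rw [hNi s i hi, card_aux]
    rw [Finset.sum_add_distrib, Finset.sum_add_distrib, Finset.sum_add_distrib,
      ← Finset.sum_div, ← Finset.sum_div, h4, hN2, hN3, hNk,
      card_aux, card_aux, card_aux]
    congr!
  rw [Finset.sum_congr rfl fun s _ => hrw s, Finset.sum_comm]
  have hx : ∀ x : V, ∑ s : ZMod k, ((if G.Adj (u (s + 1)) x then (1 : ℝ) else 0) / 2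
      + ((if G.Adj (u (s + 1)) x ∧ ¬ G.Adj (u s) x then (1 : ℝ) else 0) / 2
      + ((if IsInducedCycle G k (extSeq (Dtup k v (s + 1).val) k x) then (1 : ℝ) else 0)
      + ∑ i ∈ Finset.Ico 4 k,
        if IsInducedPath G i (extSeq (Dtup k v (s + 1).val) i x) then (1 : ℝ) else 0)))
      ≤ (k : ℝ) - 1 := by
    intro x
    refine comb_aux k hk (fun t => G.Adj (u t) x)
      (fun i s => IsInducedPath G i (extSeq (Dtup k v (s + 1).val) i x))
      (fun s => IsInducedCycle G k (extSeq (Dtup k v (s + 1).val) k x)) ?_ ?_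
    · intro i hi s h
      rw [Finset.mem_Ico] at hi
      have key : ∀ m < i - 1, (G.Adj (u (s + (m : ZMod k))) x ↔ m + 1 = i - 1) := by
        intro m hm
        have := h.2 m (by omega) (i - 1) (by omega)
        rw [hext, hext, if_neg (by omega), if_pos rfl] at this
        rw [this]; omega
      exact ⟨(key _ (by omega)).2 (by omega), fun m hm h' => by
        have := (key m (by omega)).1 h'; omega⟩
    · intro s h
      have key : ∀ m < k - 1, (G.Adj (u (s + (m : ZMod k))) x ↔ m + 1 = k - 1 ∨ m = 0) := by
        intro m hm
        have := h.2 m (by omega) (k - 1) (by omega)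
        rw [hext, hext, if_neg (by omega), if_pos rfl, Nat.mod_eq_of_lt (by omega),
          Nat.sub_add_cancel (by omega), Nat.mod_self] at this
        rw [this]; omega
      refine ⟨?_, ?_, ?_⟩
      · simpa using (key 0 (by omega)).2 (Or.inr rfl)
      · have := (key (k - 2) (by omega)).2 (Or.inl (by omega))
        rw [Nat.cast_sub (by omega)] at this
        simpa [sub_eq_add_neg] using this
      · intro m h1 h2 h'
        have := (key m (by omega)).1 h'
        omega
  refine (Finset.sum_le_sum fun x _ => hx x).trans (le_of_eq ?_)
  rw [Finset.sum_const, nsmul_eq_mul, Finset.card_univ, hn]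
end

section
/- Let G be a graph on n vertices, k ≥ 5 an integer, and let v_1 v_2 ⋯ v_k be an induced cycle of length k in G. For j = 1, ..., k, let D_j = (v_j, v_{j−1}, v_{j+1}, v_{j+2}, ..., v_{j+k−2}) (indices modulo k) and let n_{j,i} denote the quantity n_i in the definition of the weight w(D_j). Then ∑_{j=1}^{k} ( n_{j,2}/2 + n_{j,3}/2 + n_{j,4} + ⋯ + n_{j,k} ) ≤ n(k−1). -/
open Finset
open scoped Classical

lemma tw_ne {k : ℕ} (c : ℕ) (h0 : 0 < c) (hc : c < k) : (c : ZMod k) ≠ 0 := by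
  intro h
  rw [ZMod.natCast_eq_zero_iff] at h
  exact absurd (Nat.le_of_dvd h0 h) (by omega)

lemma tw_point {k : ℕ} (a : ZMod k → Prop) (t : ZMod k) (S : Finset ℕ) (hS : ∀ i ∈ S, 4 ≤ i) :
    (if a (t + 1) ∧ ¬ a t then (1 : ℝ) else 0) / 2 + (if a t then (1 : ℝ) else 0) / 2
      + ∑ i ∈ S, (if a (t + (i - 2 : ℕ)) ∧ ∀ p < i - 2, ¬ a (t + (p : ℕ)) then (1 : ℝ) else 0)
      ≤ 1 - (if a t ∨ a (t + 1) then 1 / 2 else 0) := by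
  by_cases h : a t ∨ a (t + 1)
  · have hz : ∑ i ∈ S, (if a (t + (i - 2 : ℕ)) ∧ ∀ p < i - 2, ¬ a (t + (p : ℕ)) then (1 : ℝ) else 0)
        = 0 := by
      apply Finset.sum_eq_zero
      intro i hi
      have h4 := hS i hi
      rw [if_neg]
      rintro ⟨-, h2⟩
      have e0 := h2 0 (by omega)
      have e1 := h2 1 (by omega)
      simp at e0 e1
      tauto
    rw [hz, if_pos h]
    by_cases h0 : a t
    · simp [h0]; norm_num
    · have h1 : a (t + 1) := by tauto
      simp [h0, h1]; norm_num
  · have h0 : ¬ a t := by tauto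
    have h1 : ¬ a (t + 1) := by tauto
    simp only [h0, h1, if_false, false_and, or_self]
    rw [Finset.sum_boole]
    have : (S.filter (fun i => a (t + (i - 2 : ℕ)) ∧ ∀ p < i - 2, ¬ a (t + (p : ℕ)))).card ≤ 1 := by
      rw [Finset.card_le_one]
      intro i hi j hj
      simp only [Finset.mem_filter] at hi hj
      have hi4 := hS i hi.1
      have hj4 := hS j hj.1
      rcases lt_trichotomy i j with hlt | heq | hlt
      · exact absurd hi.2.1 (hj.2.2 (i - 2) (by omega))
      · exact heq
      · exact absurd hj.2.1 (hi.2.2 (j - 2) (by omega))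
    have : ((S.filter (fun i => a (t + (i - 2 : ℕ)) ∧ ∀ p < i - 2, ¬ a (t + (p : ℕ)))).card : ℝ) ≤ 1 := by
      exact_mod_cast this
    linarith

/-- the closing-vertex condition -/
def twF {k : ℕ} (a : ZMod k → Prop) (t : ZMod k) : Prop :=
  a t ∧ a (t - 2) ∧ ∀ p : ℕ, 1 ≤ p → p ≤ k - 3 → ¬ a (t + p)

lemma twF_unique {k : ℕ} (hk : 5 ≤ k) (a : ZMod k → Prop) (t s : ZMod k)
    (ht : twF a t) (hs : twF a s) : s = t := by
  have : NeZero k := ⟨by omega⟩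
  by_contra hne
  have hp : (((s - t).val : ℕ) : ZMod k) = s - t := ZMod.natCast_zmod_val _
  have hlt := ZMod.val_lt (s - t)
  have hpos : (s - t).val ≠ 0 := by
    rw [Ne, ZMod.val_eq_zero, sub_eq_zero]; exact hne
  set p := (s - t).val with hpd
  have hge : k - 2 ≤ p := by
    by_contra hcon
    apply ht.2.2 p (by omega) (by omega)
    rw [hp]; simpa using hs.1
  apply ht.2.2 (p - 2) (by omega) (by omega)
  have : ((p - 2 : ℕ) : ZMod k) = s - t - 2 := by
    rw [Nat.cast_sub (by omega), hp]; norm_num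
  rw [this]
  have : t + (s - t - 2) = s - 2 := by ring
  rw [this]
  exact hs.2.1

lemma tw_core {k : ℕ} [NeZero k] (hk : 5 ≤ k) (a : ZMod k → Prop) (S : Finset ℕ)
    (hS : ∀ i ∈ S, 4 ≤ i) :
    ∑ t : ZMod k, ((if a (t + 1) ∧ ¬ a t then (1 : ℝ) else 0) / 2 + (if a t then (1 : ℝ) else 0) / 2
      + ∑ i ∈ S, (if a (t + (i - 2 : ℕ)) ∧ ∀ p < i - 2, ¬ a (t + (p : ℕ)) then (1 : ℝ) else 0)
      + (if twF a t then (1 : ℝ) else 0)) ≤ k - 1 := by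
  by_cases hA : ∃ m, a m
  · rw [Finset.sum_add_distrib]
    have h1 := Finset.sum_le_sum (fun t (_ : t ∈ (Finset.univ : Finset (ZMod k))) =>
      tw_point a t S hS)
    rw [Finset.sum_sub_distrib] at h1
    have hc : ∑ _t : ZMod k, (1 : ℝ) = k := by simp
    rw [hc] at h1
    set L : ZMod k → ℝ := fun t => if a t ∨ a (t + 1) then 1 / 2 else 0 with hL
    have hL0 : ∀ t, 0 ≤ L t := by
      intro t; simp only [hL]; split_ifs <;> norm_num
    have hL1 : ∀ t, (a t ∨ a (t + 1)) → L t = 1 / 2 := by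
      intro t h; simp only [hL]; rw [if_pos h]
    have key : ∑ t : ZMod k, (if twF a t then (1 : ℝ) else 0) + 1 ≤ ∑ t, L t := by
      have n1 : (1 : ZMod k) ≠ 0 := by simpa using tw_ne (k := k) 1 (by omega) (by omega)
      have n2 : (2 : ZMod k) ≠ 0 := by simpa using tw_ne (k := k) 2 (by omega) (by omega)
      have n3 : (3 : ZMod k) ≠ 0 := by simpa using tw_ne (k := k) 3 (by omega) (by omega)
      by_cases hF : ∃ t, twF a t
      · obtain ⟨t, ht⟩ := hF
        have e1 : ∑ s : ZMod k, (if twF a s then (1 : ℝ) else 0) = 1 := by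
          rw [Finset.sum_eq_single t]
          · rw [if_pos ht]
          · intro s _ hs
            rw [if_neg]
            intro h; exact hs (twF_unique hk a t s ht h)
          · simp
        rw [e1]
        have e2 : ∑ s ∈ ({t, t - 1, t - 2, t - 3} : Finset (ZMod k)), L s = 2 := by
          rw [Finset.sum_insert, Finset.sum_insert, Finset.sum_insert, Finset.sum_singleton,
            hL1 t (Or.inl ht.1), hL1 (t - 1) (Or.inr (by simpa using ht.1)),
            hL1 (t - 2) (Or.inl ht.2.1), hL1 (t - 3) (Or.inr _)]
          · norm_num
          · have : t - 3 + 1 = t - 2 := by ring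
            rw [this]; exact ht.2.1
          · simp only [Finset.mem_singleton]
            intro h; apply n1; linear_combination h
          · simp only [Finset.mem_insert, Finset.mem_singleton]
            rintro (h | h)
            · apply n1; linear_combination h
            · apply n2; linear_combination h
          · simp only [Finset.mem_insert, Finset.mem_singleton]
            rintro (h | h | h)
            · apply n1; linear_combination h
            · apply n2; linear_combination h
            · apply n3; linear_combination h
        have := Finset.sum_le_sum_of_subset_of_nonneg
          (Finset.subset_univ ({t, t - 1, t - 2, t - 3} : Finset (ZMod k)))
          (fun s _ _ => hL0 s)
        linarith
      · have e1 : ∑ s : ZMod k, (if twF a s then (1 : ℝ) else 0) = 0 := by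
          apply Finset.sum_eq_zero
          intro s _
          rw [if_neg]
          intro h; exact hF ⟨s, h⟩
        obtain ⟨m, hm⟩ := hA
        have e2 : ∑ s ∈ ({m, m - 1} : Finset (ZMod k)), L s = 1 := by
          rw [Finset.sum_insert, Finset.sum_singleton,
            hL1 m (Or.inl hm), hL1 (m - 1) (Or.inr (by simpa using hm))]
          · norm_num
          · simp only [Finset.mem_singleton]
            intro h; apply n1; linear_combination h
        have := Finset.sum_le_sum_of_subset_of_nonneg
          (Finset.subset_univ ({m, m - 1} : Finset (ZMod k)))
          (fun s _ _ => hL0 s)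
        linarith
    linarith
  · have hA' : ∀ m, ¬ a m := fun m h => hA ⟨m, h⟩
    have : (5 : ℝ) ≤ k := by exact_mod_cast hk
    simp [hA', twF]
    linarith

lemma tw_dtup {V : Type} {k : ℕ} [NeZero k] (v : ℕ → V) (j p : ℕ) :
    Dtup k v j (swap01 p) = v (((j : ZMod k) - 1 + (p : ℕ)).val) := by
  have hk : 1 ≤ k := Nat.one_le_iff_ne_zero.mpr (NeZero.ne k)
  unfold Dtup swap01
  rcases p with _ | _ | p
  · simp only [if_true, one_ne_zero, if_false]
    rw [← ZMod.val_natCast, Nat.cast_sub (by omega)]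
    simp
  · simp [ZMod.val_natCast]
  · have h1 : j + (p + 1 + 1) - 1 = j + p + 1 := by omega
    simp [h1]
    rw [← ZMod.val_natCast]
    congr 2
    push_cast; ring

lemma tw_card {V : Type} [Fintype V] (P : V → Prop) [DecidablePred P] :
    (Nat.card {x : V // P x} : ℝ) = ∑ x : V, if P x then (1 : ℝ) else 0 := by
  rw [Finset.sum_boole, Nat.card_eq_fintype_card, Fintype.card_subtype]

lemma tw_ite {P Q : Prop} [Decidable P] [Decidable Q] (h : P → Q) : (if P then (1 : ℝ) else 0) ≤ if Q then 1 else 0 := by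
  by_cases hP : P
  · simp [hP, h hP]
  · rw [if_neg hP]; split_ifs <;> norm_num

lemma tw_term {V : Type} [Fintype V] (G : SimpleGraph V) (k : ℕ) [NeZero k] (hk : 5 ≤ k)
    (v : ℕ → V) (j : ℕ) :
    ((nq G k (Dtup k v j) 2 : ℝ) / 2 + (nq G k (Dtup k v j) 3 : ℝ) / 2
          + ∑ i ∈ Finset.Icc 4 k, (nq G k (Dtup k v j) i : ℝ))
    ≤ ∑ x : V, ((if G.Adj (v (j : ZMod k).val) x then (1 : ℝ) else 0) / 2 +
      (if G.Adj (v ((j : ZMod k) - 1 + 1).val) x ∧ ¬ G.Adj (v ((j : ZMod k) - 1).val) x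
        then (1 : ℝ) else 0) / 2
      + ∑ i ∈ Finset.Icc 4 (k - 1), (if G.Adj (v ((j : ZMod k) - 1 + (i - 2 : ℕ)).val) x ∧
          ∀ p < i - 2, ¬ G.Adj (v ((j : ZMod k) - 1 + (p : ℕ)).val) x then (1 : ℝ) else 0)
      + (if twF (fun t : ZMod k => G.Adj (v t.val) x) ((j : ZMod k) - 1) then (1 : ℝ) else 0)) := by
  have d0 : Dtup k v j 0 = v (j : ZMod k).val := by
    have := tw_dtup (k := k) v j 1
    simpa [swap01] using this
  have d1 : Dtup k v j 1 = v ((j : ZMod k) - 1).val := by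
    have := tw_dtup (k := k) v j 0
    simpa [swap01] using this
  have q2 : (nq G k (Dtup k v j) 2 : ℝ) =
      ∑ x : V, if G.Adj (v (j : ZMod k).val) x then (1 : ℝ) else 0 := by
    rw [← tw_card]; simp [nq, d0]
  have q3 : (nq G k (Dtup k v j) 3 : ℝ) =
      ∑ x : V, if G.Adj (v ((j : ZMod k) - 1 + 1).val) x ∧ ¬ G.Adj (v ((j : ZMod k) - 1).val) x
        then (1 : ℝ) else 0 := by
    rw [← tw_card (fun x => G.Adj (v ((j : ZMod k) - 1 + 1).val) x ∧
      ¬ G.Adj (v ((j : ZMod k) - 1).val) x)]; simp [nq, d0, d1]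
  have hseq : ∀ i x p, p < i - 1 → extSeq (Dtup k v j) i x p = v ((j : ZMod k) - 1 + (p : ℕ)).val := by
    intro i x p hp
    unfold extSeq
    rw [if_neg (by omega), tw_dtup]
  have hlast : ∀ i x, extSeq (Dtup k v j) i x (i - 1) = x := by
    intro i x; simp [extSeq]
  have qi : ∀ i ∈ Finset.Icc 4 (k - 1), (nq G k (Dtup k v j) i : ℝ) ≤
      ∑ x : V, (if G.Adj (v ((j : ZMod k) - 1 + (i - 2 : ℕ)).val) x ∧
          ∀ p < i - 2, ¬ G.Adj (v ((j : ZMod k) - 1 + (p : ℕ)).val) x then (1 : ℝ) else 0) := by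
    intro i hi
    rw [Finset.mem_Icc] at hi
    have : nq G k (Dtup k v j) i =
        Nat.card {x : V // IsInducedPath G i (extSeq (Dtup k v j) i x)} := by
      unfold nq
      rw [if_neg (by omega), if_neg (by omega), if_neg (by omega), if_pos (by omega)]
    rw [this, tw_card]
    apply Finset.sum_le_sum
    intro x _
    apply tw_ite
    rintro ⟨-, h⟩
    constructor
    · have := h (i - 2) (by omega) (i - 1) (by omega)
      rw [hlast, hseq i x _ (by omega)] at this
      exact this.2 (by omega)
    · intro p hp
      have := h p (by omega) (i - 1) (by omega)
      rw [hlast, hseq i x _ (by omega)] at this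
      rw [this]; omega
  have qk : (nq G k (Dtup k v j) k : ℝ) ≤
      ∑ x : V, (if twF (fun t : ZMod k => G.Adj (v t.val) x) ((j : ZMod k) - 1)
        then (1 : ℝ) else 0) := by
    have : nq G k (Dtup k v j) k =
        Nat.card {x : V // IsInducedCycle G k (extSeq (Dtup k v j) k x)} := by
      unfold nq
      rw [if_neg (by omega), if_neg (by omega), if_neg (by omega), if_neg (by omega)]
    rw [this, tw_card]
    apply Finset.sum_le_sum
    intro x _
    apply tw_ite
    rintro ⟨-, h⟩
    have hkk : (k - 1 + 1) % k = 0 := by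
      rw [Nat.sub_add_cancel (by omega), Nat.mod_self]
    refine ⟨?_, ?_, ?_⟩
    · have := h 0 (by omega) (k - 1) (by omega)
      rw [hlast, hseq k x _ (by omega)] at this
      simpa using this.2 (Or.inr hkk)
    · have := h (k - 2) (by omega) (k - 1) (by omega)
      rw [hlast, hseq k x _ (by omega)] at this
      have h2 := this.2 (Or.inl (by rw [Nat.mod_eq_of_lt (by omega)]; omega))
      rw [Nat.cast_sub (by omega)] at h2
      simpa [sub_eq_add_neg] using h2
    · intro p hp1 hp2
      have := h p (by omega) (k - 1) (by omega)
      rw [hlast, hseq k x _ (by omega), hkk, Nat.mod_eq_of_lt (by omega : p + 1 < k)] at this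
      show ¬ G.Adj _ _
      rw [this]; omega
  have hsplit : ∑ i ∈ Finset.Icc 4 k, (nq G k (Dtup k v j) i : ℝ) =
      ∑ i ∈ Finset.Icc 4 (k - 1), (nq G k (Dtup k v j) i : ℝ) + nq G k (Dtup k v j) k := by
    obtain ⟨m, rfl⟩ : ∃ m, k = m + 1 := ⟨k - 1, by omega⟩
    rw [Finset.sum_Icc_succ_top (by omega)]
    simp
  rw [hsplit, Finset.sum_add_distrib, Finset.sum_add_distrib, Finset.sum_add_distrib,
    ← Finset.sum_div, ← Finset.sum_div, ← q2, ← q3, Finset.sum_comm]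
  have := Finset.sum_le_sum qi
  linarith

lemma tw_range {k : ℕ} [NeZero k] (f : ZMod k → ℝ) :
    ∑ j ∈ Finset.range k, f (j : ZMod k) = ∑ t : ZMod k, f t := by
  apply Finset.sum_bij (fun (j : ℕ) _ => (j : ZMod k))
  · simp
  · intro a ha b hb h
    rw [Finset.mem_range] at ha hb
    have := congrArg ZMod.val h
    rwa [ZMod.val_cast_of_lt ha, ZMod.val_cast_of_lt hb] at this
  · intro b _
    exact ⟨b.val, Finset.mem_range.mpr (ZMod.val_lt b), ZMod.natCast_zmod_val b⟩
  · simp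

/-- Let `G` be a graph on `n` vertices, `k ≥ 5`, and `v 0, …, v (k-1)` an induced
cycle of length `k` in `G`. With `n_{j,i}` the quantity `n_i` for the good tuple
`D_j = (v_j, v_{j-1}, v_{j+1}, …, v_{j+k-2})` (indices mod `k`), we have
`∑_{j=1}^{k} (n_{j,2}/2 + n_{j,3}/2 + n_{j,4} + ⋯ + n_{j,k}) ≤ n (k - 1)`. -/
theorem total_weighted_count_le {V : Type} [Fintype V] (G : SimpleGraph V) (n k : ℕ)
    (hn : Fintype.card V = n) (hk : 5 ≤ k) (v : ℕ → V) (hv : IsInducedCycle G k v) :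
    ∑ j ∈ Finset.range k,
        ((nq G k (Dtup k v j) 2 : ℝ) / 2 + (nq G k (Dtup k v j) 3 : ℝ) / 2
          + ∑ i ∈ Finset.Icc 4 k, (nq G k (Dtup k v j) i : ℝ))
      ≤ n * (k - 1) := by
  have : NeZero k := ⟨by omega⟩
  refine (Finset.sum_le_sum (fun j _ => tw_term G k hk v j)).trans ?_
  rw [Finset.sum_comm]
  have hx : ∀ x ∈ (Finset.univ : Finset V), _ ≤ ((k : ℝ) - 1) := fun x _ =>
    tw_core hk (fun t : ZMod k => G.Adj (v t.val) x) (Finset.Icc 4 (k - 1))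
      (fun i hi => (Finset.mem_Icc.mp hi).1)
  have hcard : ∑ _x : V, ((k : ℝ) - 1) = n * (k - 1) := by
    simp only [Finset.sum_const, Finset.card_univ, hn, nsmul_eq_mul]
  rw [← hcard]
  refine le_trans (le_of_eq ?_) (Finset.sum_le_sum hx)
  apply Finset.sum_congr rfl
  intro x _
  simp only [add_assoc]
  rw [Finset.sum_add_distrib, Finset.sum_add_distrib]
  rw [tw_range (fun t : ZMod k => (if G.Adj (v t.val) x then (1 : ℝ) else 0) / 2)]
  rw [← Finset.sum_add_distrib,
    tw_range (fun t : ZMod k => (if G.Adj (v (t - 1 + 1).val) x ∧ ¬ G.Adj (v (t - 1).val) x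
        then (1 : ℝ) else 0) / 2
      + (∑ i ∈ Finset.Icc 4 (k - 1), (if G.Adj (v (t - 1 + (i - 2 : ℕ)).val) x ∧
          ∀ p < i - 2, ¬ G.Adj (v (t - 1 + (p : ℕ)).val) x then (1 : ℝ) else 0)
      + (if twF (fun t : ZMod k => G.Adj (v t.val) x) (t - 1) then (1 : ℝ) else 0)))]
  have hsh := (Equiv.subRight (1 : ZMod k)).sum_comp (fun t : ZMod k =>
      (if G.Adj (v (t + 1).val) x ∧ ¬ G.Adj (v t.val) x
        then (1 : ℝ) else 0) / 2
      + (∑ i ∈ Finset.Icc 4 (k - 1), (if G.Adj (v (t + (i - 2 : ℕ)).val) x ∧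
          ∀ p < i - 2, ¬ G.Adj (v (t + (p : ℕ)).val) x then (1 : ℝ) else 0)
      + (if twF (fun t : ZMod k => G.Adj (v t.val) x) t then (1 : ℝ) else 0)))
  simp only [Equiv.subRight_apply] at hsh
  rw [hsh]
  rw [← Finset.sum_add_distrib]
  apply Finset.sum_congr rfl
  intro t _
  ring
end

section
/- Let G be a graph on n vertices, k ≥ 5 an integer, let v_1 v_2 ⋯ v_k be an induced cycle of length k in G, let D_j = (v_j, v_{j−1}, v_{j+1}, v_{j+2}, ..., v_{j+k−2}) for j = 1, ..., k (indices modulo k), and let n_{j,i} denote the quantity n_i in the definition of w(D_j). Fix a vertex x of G and fix j ∈ {1,...,k}. Then the contribution of x to n_{j,2}/2 + n_{j,3}/2 + n_{j,4} + ⋯ + n_{j,k} is at most 1; that is, (1/2)·[x ∈ S_{j,2}] + (1/2)·[x ∈ S_{j,3}] + ∑_{i=4}^{k} [x ∈ S_{j,i}] ≤ 1, where S_{j,i} is the set of vertices counted by n_{j,i}. -/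
open Finset
open scoped Classical

/-- Membership in the set `S_i` counted by `n_i` (for `2 ≤ i ≤ k`): `memS G k z i x` says that
`x` belongs to the set of vertices counted by the quantity `n_i` of the tuple `z`. -/
def memS {V : Type*} (G : SimpleGraph V) (k : ℕ) (z : ℕ → V) (i : ℕ) (x : V) : Prop :=
  if i = 2 then G.Adj (z 0) x
  else if i = 3 then G.Adj (z 0) x ∧ ¬ G.Adj (z 1) x
  else if i < k then IsInducedPath G i (extSeq z i x)
  else IsInducedCycle G k (extSeq z k x)

theorem memS_adj {V : Type*} (G : SimpleGraph V) (k : ℕ) (z : ℕ → V) (i : ℕ) (x : V)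
    (h4 : 4 ≤ i) (hik : i ≤ k) (h : memS G k z i x) (q : ℕ) (hq0 : 1 ≤ q) (hq : q < i - 1) :
    G.Adj x (z (swap01 q)) ↔ q = i - 2 := by
  unfold memS at h
  rw [if_neg (by omega), if_neg (by omega)] at h
  have e1 : ∀ i, extSeq z i x (i - 1) = x := fun i => by simp [extSeq]
  have e2 : extSeq z i x q = z (swap01 q) := by
    unfold extSeq
    rw [if_neg (by omega)]
  split_ifs at h with hlt
  · have := h.2 (i - 1) (by omega) q (by omega)
    rw [e1, e2] at this
    rw [this]
    omega
  · obtain rfl : i = k := by omega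
    have := h.2 (i - 1) (by omega) q (by omega)
    rw [e1, e2, Nat.mod_eq_of_lt (by omega : q + 1 < i), (by omega : i - 1 + 1 = i),
      Nat.mod_self] at this
    rw [this]
    omega

theorem memS_unique {V : Type*} (G : SimpleGraph V) (k : ℕ) (z : ℕ → V) (i i' : ℕ) (x : V)
    (h4 : 4 ≤ i) (hlt : i < i') (hik : i' ≤ k) (h : memS G k z i x) (h' : memS G k z i' x) :
    False := by
  have a := (memS_adj G k z i x h4 (by omega) h (i - 2) (by omega) (by omega)).2 rfl
  have b := (memS_adj G k z i' x (by omega) hik h' (i - 2) (by omega) (by omega)).1 a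
  omega

theorem memS_not_two {V : Type*} (G : SimpleGraph V) (k : ℕ) (z : ℕ → V) (i : ℕ) (x : V)
    (h4 : 4 ≤ i) (hik : i ≤ k) (h : memS G k z i x) : ¬ G.Adj (z 0) x := by
  intro a
  have b := (memS_adj G k z i x h4 hik h 1 (by omega) (by omega)).1 (by simpa [swap01] using a.symm)
  omega

/-- Let `G` be a graph on `n` vertices, `k ≥ 5`, `v 0, …, v (k-1)` an induced
cycle of length `k` in `G`, and `D_j = (v_j, v_{j-1}, v_{j+1}, …, v_{j+k-2})` (indices mod
`k`). For every vertex `x` and every `j < k` (0-indexed), the contribution of `x` to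
`n_{j,2}/2 + n_{j,3}/2 + n_{j,4} + ⋯ + n_{j,k}` is at most `1`:
`(1/2)[x ∈ S_{j,2}] + (1/2)[x ∈ S_{j,3}] + ∑_{i=4}^{k} [x ∈ S_{j,i}] ≤ 1`. -/
theorem contribution_le_one {V : Type} [Fintype V] (G : SimpleGraph V) (n k : ℕ)
    (hn : Fintype.card V = n) (hk : 5 ≤ k) (v : ℕ → V) (hv : IsInducedCycle G k v)
    (x : V) (j : ℕ) (hj : j < k) :
    (if memS G k (Dtup k v j) 2 x then (1 : ℝ) / 2 else 0)
        + (if memS G k (Dtup k v j) 3 x then (1 : ℝ) / 2 else 0)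
        + ∑ i ∈ Finset.Icc 4 k, (if memS G k (Dtup k v j) i x then (1 : ℝ) else 0)
      ≤ 1 := by
  generalize Dtup k v j = z
  by_cases hex : ∃ i ∈ Finset.Icc 4 k, memS G k z i x
  · obtain ⟨i, hi, hm⟩ := hex
    have hi' := Finset.mem_Icc.1 hi
    have hna := memS_not_two G k z i x hi'.1 hi'.2 hm
    have h2 : ¬ memS G k z 2 x := by simpa [memS] using hna
    have h3 : ¬ memS G k z 3 x := by
      intro h
      simp [memS] at h
      exact hna h.1
    rw [if_neg h2, if_neg h3, Finset.sum_eq_single_of_mem i hi]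
    · rw [if_pos hm]
      norm_num
    · intro b hb hbi
      have hb' := Finset.mem_Icc.1 hb
      refine if_neg fun hmb => ?_
      rcases lt_or_gt_of_ne hbi with hl | hl
      · exact memS_unique G k z b i x hb'.1 hl hi'.2 hmb hm
      · exact memS_unique G k z i b x hi'.1 hl hb'.2 hm hmb
  · rw [Finset.sum_eq_zero]
    · split_ifs <;> norm_num
    · intro i hi
      exact if_neg fun h => hex ⟨i, hi, h⟩
end

section
/- Let G be a graph on n vertices, k ≥ 5 an integer, and let C be an induced cycle of length k in G. Then the sum of the weights w(D) over the 2k good k-tuples D whose underlying induced cycle is C (one tuple for each choice of starting vertex and traversal direction of C) is at least k^k/(2 n^k). -/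
open Finset
open scoped Classical

namespace CycW

def Q {k : ℕ} (p : ZMod k → Prop) (i : ℕ) (a : ZMod k) : Prop :=
  p (a + ((i - 2 : ℕ) : ZMod k)) ∧ ∀ t : ℕ, t < i - 2 → ¬ p (a + (t : ZMod k))

def R {k : ℕ} (p : ZMod k → Prop) (a : ZMod k) : Prop :=
  p a ∧ p (a + ((k - 2 : ℕ) : ZMod k)) ∧
    ∀ t : ℕ, 0 < t → t < k - 2 → ¬ p (a + (t : ZMod k))

noncomputable def c (i : ℕ) : ℝ := if i ≤ 3 then 1 / 2 else 1

lemma c_le (i : ℕ) : c i ≤ 1 := by unfold c; split_ifs <;> norm_num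
lemma c_pos (i : ℕ) : 0 < c i := by unfold c; split_ifs <;> norm_num

noncomputable def F {k : ℕ} (p : ZMod k → Prop) (a : ZMod k) : ℝ :=
  ∑ i ∈ Icc 2 (k - 1), c i * (if Q p i a then 1 else 0)

lemma Q_uniq {k : ℕ} {p : ZMod k → Prop} {i j : ℕ} {a : ZMod k} (hi : 2 ≤ i) (hj : 2 ≤ j)
    (h1 : Q p i a) (h2 : Q p j a) : i = j := by
  rcases lt_trichotomy i j with h | h | h
  · exact absurd h1.1 (h2.2 _ (by omega))
  · exact h
  · exact absurd h2.1 (h1.2 _ (by omega))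

lemma F_cases {k : ℕ} (p : ZMod k → Prop) (a : ZMod k) :
    F p a = 0 ∨ ∃ i, 2 ≤ i ∧ Q p i a ∧ F p a = c i := by
  by_cases h : ∃ i ∈ Icc 2 (k - 1), Q p i a
  · right
    obtain ⟨i, hi, hQ⟩ := h
    have hi2 := (mem_Icc.1 hi).1
    refine ⟨i, hi2, hQ, ?_⟩
    unfold F
    rw [Finset.sum_eq_single i]
    · simp [hQ]
    · intro j hj hne
      rw [if_neg, mul_zero]
      intro hQ'
      exact hne (Q_uniq (mem_Icc.1 hj).1 hi2 hQ' hQ)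
    · intro h; exact absurd hi h
  · left
    push Not at h
    unfold F
    apply Finset.sum_eq_zero
    intro i hi
    simp [h i hi]

lemma F_le_one {k : ℕ} (p : ZMod k → Prop) (a : ZMod k) : F p a ≤ 1 := by
  rcases F_cases p a with h | ⟨i, _, _, h⟩
  · rw [h]; norm_num
  · rw [h]; exact c_le i

lemma F_le_half {k : ℕ} (p : ZMod k → Prop) (a : ZMod k) (ha : p a ∨ p (a + 1)) :
    F p a ≤ 1 / 2 := by
  rcases F_cases p a with h | ⟨i, hi, hQ, h⟩
  · rw [h]; norm_num
  · rw [h]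
    have : i ≤ 3 := by
      by_contra hc
      rcases ha with ha | ha
      · exact hQ.2 0 (by omega) (by simpa using ha)
      · exact hQ.2 1 (by omega) (by simpa using ha)
    simp [c, this]

lemma F_zero {k : ℕ} (p : ZMod k → Prop) (a : ZMod k) (h : ∀ b, ¬ p b) : F p a = 0 := by
  rcases F_cases p a with h' | ⟨i, hi, hQ, _⟩
  · exact h'
  · exact absurd hQ.1 (h _)

lemma sum_F_le {k : ℕ} [NeZero k] (p : ZMod k → Prop) (A : Finset (ZMod k))
    (hA : ∀ a ∈ A, p a ∨ p (a + 1)) : ∑ a, F p a ≤ k - (A.card : ℝ) / 2 := by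
  have h1 : ∑ a, F p a ≤ ∑ a, (1 - if a ∈ A then (1 / 2 : ℝ) else 0) := by
    apply Finset.sum_le_sum
    intro a _
    split_ifs with h
    · have := F_le_half p a (hA a h); linarith
    · have := F_le_one p a; linarith
  refine h1.trans (le_of_eq ?_)
  rw [Finset.sum_sub_distrib, Finset.sum_ite_mem]
  simp [ZMod.card]
  ring

lemma cast_sub_eq {k : ℕ} (s : ℕ) (hs : s ≤ k) : ((k - s : ℕ) : ZMod k) = - (s : ZMod k) := by
  rw [Nat.cast_sub hs]; simp

lemma R_uniq {k : ℕ} (hk : 5 ≤ k) {p : ZMod k → Prop} {a b : ZMod k} (ha : R p a) (hb : R p b) :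
    b = a := by
  haveI : NeZero k := ⟨by omega⟩
  by_contra hne
  have hb' : b = a + (((b - a).val : ℕ) : ZMod k) := by
    rw [ZMod.natCast_zmod_val]; ring
  have hlt := ZMod.val_lt (b - a)
  have h0 : (b - a).val ≠ 0 := by
    intro h; rw [ZMod.val_eq_zero] at h; exact hne (sub_eq_zero.1 h)
  generalize (b - a).val = t at *
  have h1 : ¬ t < k - 2 := by
    intro h
    exact ha.2.2 t (by omega) h (hb' ▸ hb.1)
  have h2 := hb.2.1
  have : t = k - 2 ∨ t = k - 1 := by omega
  rcases this with rfl | rfl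
  · apply ha.2.2 (k - 4) (by omega) (by omega)
    convert h2 using 1
    rw [hb', cast_sub_eq 4 (by omega), cast_sub_eq 2 (by omega)]
    push_cast; ring
  · apply ha.2.2 (k - 3) (by omega) (by omega)
    convert h2 using 1
    rw [hb', cast_sub_eq 3 (by omega), cast_sub_eq 2 (by omega), cast_sub_eq 1 (by omega)]
    push_cast; ring

lemma natCast_ne {k : ℕ} {s t : ℕ} (hs : s < k) (ht : t < k) (h : s ≠ t) :
    (s : ZMod k) ≠ (t : ZMod k) := by
  intro h'
  rw [ZMod.natCast_eq_natCast_iff'] at h'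
  rw [Nat.mod_eq_of_lt hs, Nat.mod_eq_of_lt ht] at h'
  exact h h'

lemma core {k : ℕ} [NeZero k] (hk : 5 ≤ k) (p : ZMod k → Prop) :
    ∑ a, F p a + ∑ a, (if R p a then (1 : ℝ) else 0) ≤ k - 1 := by
  have hk' : (5 : ℝ) ≤ k := by exact_mod_cast hk
  by_cases hR : ∃ a, R p a
  · obtain ⟨a, ha⟩ := hR
    have h1 : ∑ b, (if R p b then (1 : ℝ) else 0) = 1 := by
      rw [Finset.sum_eq_single a]
      · simp [ha]
      · intro b _ hne
        rw [if_neg]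
        intro hb; exact hne (R_uniq hk ha hb)
      · simp
    have h2 := sum_F_le p ((range 4).image fun t : ℕ => a - (t : ZMod k)) (by
      intro b hb
      obtain ⟨t, ht, rfl⟩ := mem_image.1 hb
      have hp := ha.2.1
      rw [cast_sub_eq 2 (by omega)] at hp
      have ht := mem_range.1 ht
      interval_cases t
      · left; simpa using ha.1
      · right; simpa using ha.1
      · left; rwa [sub_eq_add_neg]
      · right; convert hp using 1; push_cast; ring)
    rw [card_image_of_injOn] at h2
    · rw [h1]; simp at h2; linarith
    · intro s hs t ht h
      by_contra hne
      simp at hs ht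
      refine natCast_ne (k := k) (by omega) (by omega) hne ?_
      simpa using h
  · push Not at hR
    have h1 : ∑ b, (if R p b then (1 : ℝ) else 0) = 0 := by simp [hR]
    rw [h1]
    by_cases hp : ∃ a, p a
    · obtain ⟨a, ha⟩ := hp
      have h2 := sum_F_le p ((range 2).image fun t : ℕ => a - (t : ZMod k)) (by
        intro b hb
        obtain ⟨t, ht, rfl⟩ := mem_image.1 hb
        have ht := mem_range.1 ht
        interval_cases t
        · left; simpa using ha
        · right; simpa using ha)
      rw [card_image_of_injOn] at h2
      · simp at h2; linarith
      · intro s hs t ht h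
        by_contra hne
        simp at hs ht
        refine natCast_ne (k := k) (by omega) (by omega) hne ?_
        simpa using h
    · push Not at hp
      simp [F_zero p _ hp]
      linarith

lemma amgm {ι : Type*} [Fintype ι] (s : Finset ℕ) (t : ι → ℕ → ℝ)
    (ht : ∀ a, ∀ i ∈ s, 0 < t a i) (hsum : ∑ a, ∑ i ∈ s, t a i ≤ Fintype.card ι * s.card) :
    (Fintype.card ι : ℝ) ≤ ∑ a, ∏ i ∈ s, (t a i)⁻¹ := by
  have h1 : ∀ a, 1 - ∑ i ∈ s, (t a i - 1) ≤ ∏ i ∈ s, (t a i)⁻¹ := by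
    intro a
    have e : ∏ i ∈ s, (t a i)⁻¹ = Real.exp (∑ i ∈ s, -Real.log (t a i)) := by
      rw [Real.exp_sum]
      apply Finset.prod_congr rfl
      intro i hi
      rw [Real.exp_neg, Real.exp_log (ht a i hi)]
    rw [e]
    refine le_trans ?_ (Real.add_one_le_exp _)
    have : ∑ i ∈ s, Real.log (t a i) ≤ ∑ i ∈ s, (t a i - 1) :=
      Finset.sum_le_sum fun i hi => Real.log_le_sub_one_of_pos (ht a i hi)
    rw [Finset.sum_neg_distrib]
    linarith
  refine le_trans ?_ (Finset.sum_le_sum fun a _ => h1 a)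
  simp only [Finset.sum_sub_distrib, Finset.sum_const, Finset.card_univ, nsmul_eq_mul, mul_one]
  linarith

structure Cyc {V : Type*} (G : SimpleGraph V) (k : ℕ) (u : ZMod k → V) : Prop where
  inj : Function.Injective u
  adj : ∀ a b, G.Adj (u a) (u b) ↔ b = a + 1 ∨ a = b + 1

def T {V : Type*} (k : ℕ) (u : ZMod k → V) (a : ZMod k) : Fin k → V :=
  fun q => u (a + (swap01 q.1 : ℕ))

lemma swap_lt {k i : ℕ} (hk : 5 ≤ k) (hi : i < k) : swap01 i < k := by
  unfold swap01; split_ifs <;> omega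

lemma swap_swap (i : ℕ) : swap01 (swap01 i) = i := by
  by_cases h : i = 0
  · subst h; rfl
  by_cases h' : i = 1
  · subst h'; rfl
  simp [swap01, h, h']

lemma tup_swap {V : Type*} {k : ℕ} (hk : 5 ≤ k) (h0 : 0 < k) (u : ZMod k → V) (a : ZMod k)
    {i : ℕ} (hi : i < k) : tupFun h0 (T k u a) (swap01 i) = u (a + (i : ZMod k)) := by
  unfold tupFun T
  simp only [Nat.mod_eq_of_lt (swap_lt hk hi), swap_swap]

lemma cyc_adj_nat {V : Type*} {G : SimpleGraph V} {k : ℕ} {u : ZMod k → V} (hu : Cyc G k u)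
    (a : ZMod k) {i j : ℕ} (hi : i < k) (hj : j < k) :
    G.Adj (u (a + (i : ZMod k))) (u (a + (j : ZMod k))) ↔ (i + 1) % k = j ∨ (j + 1) % k = i := by
  rw [hu.adj]
  have key : ∀ {i j : ℕ}, j < k → (a + (j : ZMod k) = a + (i : ZMod k) + 1 ↔ (i + 1) % k = j) := by
    intro i j hj
    rw [add_assoc, add_right_inj]
    have : ((i : ZMod k) + 1) = ((i + 1 : ℕ) : ZMod k) := by push_cast; rfl
    rw [this, ZMod.natCast_eq_natCast_iff', Nat.mod_eq_of_lt hj, eq_comm]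
  rw [key hj, key hi]

lemma cyc_inj_nat {V : Type*} {G : SimpleGraph V} {k : ℕ} {u : ZMod k → V} (hu : Cyc G k u)
    (a : ZMod k) {i j : ℕ} (hi : i < k) (hj : j < k)
    (h : u (a + (i : ZMod k)) = u (a + (j : ZMod k))) : i = j := by
  by_contra hne
  exact natCast_ne hi hj hne (add_left_cancel (hu.inj h))

lemma good {V : Type*} {G : SimpleGraph V} {k : ℕ} (hk : 5 ≤ k) (h0 : 0 < k) {u : ZMod k → V}
    (hu : Cyc G k u) (a : ZMod k) : IsGoodTuple G k (tupFun h0 (T k u a)) := by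
  unfold IsGoodTuple
  constructor
  · intro i hi j hj h
    simp only [tup_swap hk h0 u a hi, tup_swap hk h0 u a hj] at h
    exact cyc_inj_nat hu a hi hj h
  · intro i hi j hj
    simp only [tup_swap hk h0 u a hi, tup_swap hk h0 u a hj]
    exact cyc_adj_nat hu a hi hj

lemma ext_lt {V : Type*} {k : ℕ} (hk : 5 ≤ k) (h0 : 0 < k) (u : ZMod k → V) (a : ZMod k)
    {i q : ℕ} (x : V) (hi : i ≤ k) (hq : q < i - 1) :
    extSeq (tupFun h0 (T k u a)) i x q = u (a + (q : ZMod k)) := by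
  unfold extSeq
  rw [if_neg (by omega), tup_swap hk h0 u a (by omega)]

lemma ext_last {V : Type*} (z : ℕ → V) (i : ℕ) (x : V) : extSeq z i x (i - 1) = x := by
  simp [extSeq]

lemma ext_self {V : Type*} {k : ℕ} (hk : 5 ≤ k) (h0 : 0 < k) (u : ZMod k → V) (a : ZMod k)
    {i q : ℕ} (hi : i ≤ k) (hi1 : 1 ≤ i) (hq : q < i) :
    extSeq (tupFun h0 (T k u a)) i (u (a + ((i - 1 : ℕ) : ZMod k))) q = u (a + (q : ZMod k)) := by
  by_cases h : q = i - 1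
  · subst h; rw [ext_last]
  · exact ext_lt hk h0 u a _ hi (by omega)

lemma z0 {V : Type*} {k : ℕ} (hk : 5 ≤ k) (h0 : 0 < k) (u : ZMod k → V) (a : ZMod k) :
    tupFun h0 (T k u a) 0 = u (a + 1) := by
  have := tup_swap hk h0 u a (i := 1) (by omega)
  simpa [swap01] using this

lemma z1 {V : Type*} {k : ℕ} (hk : 5 ≤ k) (h0 : 0 < k) (u : ZMod k → V) (a : ZMod k) :
    tupFun h0 (T k u a) 1 = u a := by
  have := tup_swap hk h0 u a (i := 0) (by omega)
  simpa [swap01] using this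

lemma card_sub_le {V : Type} [Fintype V] (P P' : V → Prop) (h : ∀ x, P x → P' x) :
    ((Nat.card {x : V // P x} : ℕ) : ℝ) ≤ ∑ x, if P' x then (1 : ℝ) else 0 := by
  rw [Nat.card_eq_fintype_card, Fintype.card_subtype, Finset.sum_boole]
  exact_mod_cast Finset.card_le_card (fun x hx => by simp at hx ⊢; exact h x hx)

lemma nq_two {V : Type} [Fintype V] {G : SimpleGraph V} {k : ℕ} (hk : 5 ≤ k) (h0 : 0 < k)
    {u : ZMod k → V} (a : ZMod k) :
    (nq G k (tupFun h0 (T k u a)) 2 : ℝ)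
      ≤ ∑ x, if Q (fun b => G.Adj (u b) x) 2 (a + 1) then (1 : ℝ) else 0 := by
  unfold nq
  simp only [z0 hk, show (2 : ℕ) ≠ 1 by norm_num, if_false, if_true]
  apply card_sub_le
  intro x hx
  refine ⟨by simpa using hx, by simp⟩

lemma nq_mid {V : Type} [Fintype V] {G : SimpleGraph V} {k : ℕ} (hk : 5 ≤ k) (h0 : 0 < k)
    {u : ZMod k → V} (a : ZMod k) {i : ℕ} (hi : 3 ≤ i) (hik : i < k) :
    (nq G k (tupFun h0 (T k u a)) i : ℝ)
      ≤ ∑ x, if Q (fun b => G.Adj (u b) x) i a then (1 : ℝ) else 0 := by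
  unfold nq
  rw [if_neg (by omega), if_neg (by omega)]
  by_cases h3 : i = 3
  · subst h3
    simp only [z0 hk, z1 hk, if_true]
    apply card_sub_le
    intro x hx
    refine ⟨by simpa using hx.1, ?_⟩
    intro t ht
    have : t = 0 := by omega
    subst this
    simpa using hx.2
  · rw [if_neg h3, if_pos hik]
    apply card_sub_le
    intro x hx
    have key : ∀ t < i - 1, (G.Adj (u (a + (t : ZMod k))) x ↔ t + 1 = i - 1) := by
      intro t ht
      have := hx.2 t (by omega) (i - 1) (by omega)
      rw [ext_last, ext_lt hk h0 u a x hik.le ht] at this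
      rw [this]; omega
    exact ⟨(key (i - 2) (by omega)).2 (by omega), fun t ht h => by
      have := (key t (by omega)).1 h
      omega⟩

lemma nq_last {V : Type} [Fintype V] {G : SimpleGraph V} {k : ℕ} (hk : 5 ≤ k) (h0 : 0 < k)
    {u : ZMod k → V} (a : ZMod k) :
    (nq G k (tupFun h0 (T k u a)) k : ℝ)
      ≤ ∑ x, if R (fun b => G.Adj (u b) x) a then (1 : ℝ) else 0 := by
  unfold nq
  rw [if_neg (by omega), if_neg (by omega), if_neg (by omega), if_neg (by omega)]
  apply card_sub_le
  intro x hx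
  have key : ∀ t < k - 1, (G.Adj (u (a + (t : ZMod k))) x ↔ t + 1 = k - 1 ∨ t = 0) := by
    intro t ht
    have := hx.2 t (by omega) (k - 1) (by omega)
    rw [ext_last, ext_lt hk h0 u a x le_rfl ht, show k - 1 + 1 = k by omega, Nat.mod_self,
      Nat.mod_eq_of_lt (by omega)] at this
    rw [this]; omega
  refine ⟨by simpa using (key 0 (by omega)).2 (Or.inr rfl),
    (key (k - 2) (by omega)).2 (by omega), fun t ht ht' h => ?_⟩
  have := (key t (by omega)).1 h
  omega

lemma nq_pos {V : Type} [Fintype V] {G : SimpleGraph V} {k : ℕ} (hk : 5 ≤ k) (h0 : 0 < k)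
    {u : ZMod k → V} (hu : Cyc G k u) (a : ZMod k) {i : ℕ} (hi : 1 ≤ i) (hik : i ≤ k) :
    0 < nq G k (tupFun h0 (T k u a)) i := by
  unfold nq
  have h01 : G.Adj (u (a + 1)) (u (a + 2)) := by
    rw [hu.adj]; left; ring
  have h02 : ¬ G.Adj (u a) (u (a + 2)) := by
    have := cyc_adj_nat hu a (i := 0) (j := 2) (by omega) (by omega)
    simp only [Nat.cast_zero, add_zero, Nat.cast_ofNat] at this
    rw [this, Nat.mod_eq_of_lt (by omega), Nat.mod_eq_of_lt (by omega)]
    omega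
  split_ifs with h1 h2 h3 h4
  · haveI : Nonempty V := ⟨u a⟩
    exact Nat.card_pos
  · rw [z0 hk]
    haveI : Nonempty {x : V // G.Adj (u (a + 1)) x} := ⟨⟨u (a + 2), h01⟩⟩
    exact Nat.card_pos
  · rw [z0 hk, z1 hk]
    haveI : Nonempty {x : V // G.Adj (u (a + 1)) x ∧ ¬ G.Adj (u a) x} :=
      ⟨⟨u (a + 2), h01, h02⟩⟩
    exact Nat.card_pos
  · haveI : Nonempty {x : V // IsInducedPath G i (extSeq (tupFun h0 (T k u a)) i x)} := by
      refine ⟨⟨u (a + ((i - 1 : ℕ) : ZMod k)), ?_, ?_⟩⟩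
      · intro s hs t ht h
        rw [ext_self hk h0 u a hik hi hs, ext_self hk h0 u a hik hi ht] at h
        exact cyc_inj_nat hu a (by omega) (by omega) h
      · intro s hs t ht
        rw [ext_self hk h0 u a hik hi hs, ext_self hk h0 u a hik hi ht,
          cyc_adj_nat hu a (by omega) (by omega), Nat.mod_eq_of_lt (by omega),
          Nat.mod_eq_of_lt (by omega)]
    exact Nat.card_pos
  · haveI : Nonempty {x : V // IsInducedCycle G k (extSeq (tupFun h0 (T k u a)) k x)} := by
      refine ⟨⟨u (a + ((k - 1 : ℕ) : ZMod k)), ?_, ?_⟩⟩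
      · intro s hs t ht h
        rw [ext_self hk h0 u a le_rfl (by omega) hs, ext_self hk h0 u a le_rfl (by omega) ht] at h
        exact cyc_inj_nat hu a (by omega) (by omega) h
      · intro s hs t ht
        rw [ext_self hk h0 u a le_rfl (by omega) hs, ext_self hk h0 u a le_rfl (by omega) ht,
          cyc_adj_nat hu a (by omega) (by omega)]
    exact Nat.card_pos

lemma sum_nq {V : Type} [Fintype V] {G : SimpleGraph V} {k : ℕ} [NeZero k] (hk : 5 ≤ k)
    (h0 : 0 < k) {u : ZMod k → V} :
    ∑ a, ∑ i ∈ Icc 2 k, c i * (nq G k (tupFun h0 (T k u a)) i : ℝ)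
      ≤ (k - 1) * Fintype.card V := by
  have e1 : ∀ f : ℕ → ℝ, ∑ i ∈ Icc 2 k, f i = ∑ i ∈ Icc 2 (k - 1), f i + f k := by
    intro f
    obtain ⟨m, rfl⟩ : ∃ m, k = m + 1 := ⟨k - 1, by omega⟩
    rw [Finset.sum_Icc_succ_top (by omega)]; simp
  have hck : c k = 1 := by unfold c; rw [if_neg (by omega)]
  calc ∑ a, ∑ i ∈ Icc 2 k, c i * (nq G k (tupFun h0 (T k u a)) i : ℝ)
      = ∑ i ∈ Icc 2 (k - 1), c i * ∑ a, (nq G k (tupFun h0 (T k u a)) i : ℝ)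
        + ∑ a, (nq G k (tupFun h0 (T k u a)) k : ℝ) := by
        simp only [e1, hck, one_mul, Finset.sum_add_distrib]
        rw [Finset.sum_comm]
        simp only [Finset.mul_sum]
    _ ≤ ∑ i ∈ Icc 2 (k - 1), c i * (∑ a, ∑ x, if Q (fun b => G.Adj (u b) x) i a then (1 : ℝ) else 0)
        + ∑ a, ∑ x, (if R (fun b => G.Adj (u b) x) a then (1 : ℝ) else 0) := by
        apply add_le_add
        · apply Finset.sum_le_sum
          intro i hi
          rw [mem_Icc] at hi
          apply mul_le_mul_of_nonneg_left _ (c_pos i).le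
          by_cases h2 : i = 2
          · subst h2
            rw [← Equiv.sum_comp (Equiv.addRight (1 : ZMod k))
              (fun a => ∑ x, if Q (fun b => G.Adj (u b) x) 2 a then (1 : ℝ) else 0)]
            exact Finset.sum_le_sum fun a _ => nq_two hk h0 a
          · exact Finset.sum_le_sum fun a _ => nq_mid hk h0 a (by omega) (by omega)
        · exact Finset.sum_le_sum fun a _ => nq_last hk h0 a
    _ = ∑ x, (∑ a, F (fun b => G.Adj (u b) x) a
          + ∑ a, (if R (fun b => G.Adj (u b) x) a then (1 : ℝ) else 0)) := by
        rw [Finset.sum_add_distrib]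
        congr 1
        · unfold F
          simp only [Finset.mul_sum]
          rw [Finset.sum_congr rfl (fun i _ => Finset.sum_comm), Finset.sum_comm]
          refine Finset.sum_congr rfl (fun x _ => ?_)
          rw [Finset.sum_comm]
        · rw [Finset.sum_comm]
    _ ≤ ∑ x : V, ((k : ℝ) - 1) := Finset.sum_le_sum fun x _ => core hk _
    _ = (k - 1) * Fintype.card V := by
        rw [Finset.sum_const, Finset.card_univ, nsmul_eq_mul, mul_comm]

lemma prod_c {k : ℕ} (hk : 5 ≤ k) : ∏ i ∈ Icc 2 k, c i = 1 / 4 := by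
  have h : Icc 2 3 ⊆ Icc 2 k := by
    intro i; simp only [mem_Icc]; omega
  rw [← Finset.prod_subset h]
  · rw [show Icc 2 3 = ({2, 3} : Finset ℕ) from rfl]
    simp [c]; norm_num
  · intro i hi hi'
    rw [mem_Icc] at hi hi'
    unfold c; rw [if_neg (by omega)]

lemma one_dir {V : Type} [Fintype V] {G : SimpleGraph V} {k : ℕ} [NeZero k] (hk : 5 ≤ k)
    (h0 : 0 < k) {u : ZMod k → V} (hu : Cyc G k u) :
    (k : ℝ) ^ k / (4 * (Fintype.card V : ℝ) ^ k) ≤ ∑ a, wt G k (tupFun h0 (T k u a)) := by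
  have hn : (0 : ℝ) < Fintype.card V := by
    haveI : Nonempty V := ⟨u 0⟩
    exact_mod_cast Fintype.card_pos
  set n : ℝ := ((Fintype.card V : ℕ) : ℝ) with hndef
  have hkp : (0 : ℝ) < k := by exact_mod_cast h0
  have hcard : (Icc 2 k).card = k - 1 := by simp
  have hpos : ∀ a, ∀ i ∈ Icc 2 k, (0 : ℝ) < nq G k (tupFun h0 (T k u a)) i := by
    intro a i hi
    rw [mem_Icc] at hi
    exact_mod_cast nq_pos hk h0 hu a (by omega) hi.2
  have hA := amgm (Icc 2 k)
    (fun a i => (k / n) * (c i * (nq G k (tupFun h0 (T k u a)) i : ℝ)))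
    (fun a i hi => by have := hpos a i hi; have := c_pos i; positivity) (by
      simp only [← Finset.mul_sum]
      have := sum_nq (G := G) (u := u) hk h0
      rw [hcard, ZMod.card, Nat.cast_sub (by omega)]
      calc (k / n) * _ ≤ (k / n) * ((k - 1) * n) := mul_le_mul_of_nonneg_left this (by positivity)
        _ = _ := by field_simp; simp)
  have hw : ∀ a, wt G k (tupFun h0 (T k u a)) = (n⁻¹ * (k / n) ^ (k - 1) * (1 / 4)) *
      ∏ i ∈ Icc 2 k, ((k / n) * (c i * (nq G k (tupFun h0 (T k u a)) i : ℝ)))⁻¹ := by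
    intro a
    unfold wt
    rw [← Finset.mul_prod_Ioc_eq_prod_Icc (by omega : 1 ≤ k)]
    have e : Ioc 1 k = Icc 2 k := by ext; simp [Nat.succ_le_iff]
    rw [e]
    have e1 : nq G k (tupFun h0 (T k u a)) 1 = Fintype.card V := by
      simp [nq, Nat.card_eq_fintype_card]
    rw [e1, ← hndef]
    simp only [mul_inv, Finset.prod_mul_distrib, Finset.prod_const, hcard]
    rw [Finset.prod_inv_distrib c, prod_c hk]
    have hq : ((k : ℝ) / n) ^ (k - 1) * ((k : ℝ)⁻¹ * n⁻¹⁻¹) ^ (k - 1) = 1 := by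
      rw [← mul_pow]
      have : (k : ℝ) / n * ((k : ℝ)⁻¹ * n⁻¹⁻¹) = 1 := by field_simp
      rw [this, one_pow]
    generalize ∏ i ∈ Icc 2 k, ((nq G k (tupFun h0 (T k u a)) i : ℝ))⁻¹ = P
    have e4 : ((1 / 4 : ℝ))⁻¹ = 4 := by norm_num
    rw [e4]
    have : (k : ℝ) / n = k * n⁻¹ := rfl
    first
      | linear_combination (-n⁻¹ * P) * hq
      | (rw [div_eq_mul_inv, mul_inv] at *; linear_combination (-n⁻¹ * P) * hq)
  simp only [hw, ← Finset.mul_sum]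
  rw [ZMod.card] at hA
  refine le_trans (le_of_eq ?_) (mul_le_mul_of_nonneg_left hA (by positivity))
  obtain ⟨m, rfl⟩ : ∃ m, k = m + 1 := ⟨k - 1, by omega⟩
  simp only [Nat.add_sub_cancel, div_pow, pow_succ]
  field_simp

lemma T_inj {V : Type*} {G : SimpleGraph V} {k : ℕ} (hk : 5 ≤ k) {u : ZMod k → V}
    (hu : Cyc G k u) {a b : ZMod k} (h : T k u a = T k u b) : a = b := by
  have h0 : 0 < k := by omega
  apply hu.inj
  rw [← z1 hk h0 u a, h, z1 hk h0]

lemma T_range {V : Type*} {k : ℕ} (hk : 5 ≤ k) (u : ZMod k → V) (a : ZMod k) :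
    Set.range (T k u a) = Set.range u := by
  haveI : NeZero k := ⟨by omega⟩
  ext x
  constructor
  · rintro ⟨q, rfl⟩; exact ⟨_, rfl⟩
  · rintro ⟨b, rfl⟩
    refine ⟨⟨swap01 (b - a).val, swap_lt hk (ZMod.val_lt _)⟩, ?_⟩
    simp only [T, swap_swap, ZMod.natCast_zmod_val]
    congr 1; ring

end CycW

/-- Let `G` be a graph on `n` vertices, `k ≥ 5`, and `C` an induced cycle of
length `k` in `G`, given by vertices `v 0, …, v (k-1)`. The sum of the weights `w(D)` over the
`2k` good `k`-tuples `D` whose underlying induced cycle is `C` (equivalently, since the cycle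
is induced, whose set of entries is the vertex set of `C`) is at least `k^k / (2 n^k)`. -/
theorem sum_weights_underlying_cycle_ge {V : Type} [Fintype V] (G : SimpleGraph V) (n k : ℕ)
    (hn : Fintype.card V = n) (hk : 5 ≤ k) (v : ℕ → V) (hv : IsInducedCycle G k v) :
    (k : ℝ) ^ k / (2 * (n : ℝ) ^ k)
      ≤ ∑ z ∈ Finset.univ.filter (fun z : Fin k → V =>
            IsGoodTuple G k (tupFun (by omega) z) ∧ Set.range z = v '' Set.Iio k),
          wt G k (tupFun (by omega) z) := by
  have h0 : 0 < k := by omega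
  haveI : NeZero k := ⟨by omega⟩
  subst hn
  let u : ZMod k → V := fun a => v a.val
  have hu : CycW.Cyc G k u := by
    have key : ∀ a b : ZMod k, b = a + 1 ↔ (a.val + 1) % k = b.val := by
      intro a b
      have : a + 1 = ((a.val + 1 : ℕ) : ZMod k) := by
        push_cast; rw [ZMod.natCast_zmod_val]
      rw [this, ← ZMod.val_injective k |>.eq_iff, ZMod.val_natCast, eq_comm]
    constructor
    · intro a b h
      exact ZMod.val_injective k (hv.1 _ (ZMod.val_lt a) _ (ZMod.val_lt b) h)
    · intro a b
      rw [key, key]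
      exact hv.2 _ (ZMod.val_lt a) _ (ZMod.val_lt b)
  let u' : ZMod k → V := fun a => u (-a)
  have hu' : CycW.Cyc G k u' := by
    constructor
    · intro a b h; exact neg_injective (hu.inj h)
    · intro a b
      show G.Adj (u (-a)) (u (-b)) ↔ _
      rw [hu.adj, or_comm]
      refine or_congr ⟨fun h => ?_, fun h => ?_⟩ ⟨fun h => ?_, fun h => ?_⟩
      · linear_combination h
      · linear_combination h
      · linear_combination h
      · linear_combination h
  have hr : Set.range u = v '' Set.Iio k := by
    ext x
    constructor
    · rintro ⟨a, rfl⟩; exact ⟨a.val, ZMod.val_lt a, rfl⟩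
    · rintro ⟨i, hi, rfl⟩
      exact ⟨(i : ZMod k), by simp only [u]; rw [ZMod.val_natCast, Nat.mod_eq_of_lt hi]⟩
  have hr' : Set.range u' = v '' Set.Iio k := by
    rw [← hr]
    exact (Equiv.neg (ZMod k)).surjective.range_comp u
  let f : ZMod k ⊕ ZMod k → (Fin k → V) := Sum.elim (CycW.T k u) (CycW.T k u')
  have hne : ∀ a b, CycW.T k u a ≠ CycW.T k u' b := by
    intro a b h
    have e0 : u (a + 1) = u (-(b + 1)) := by
      rw [← CycW.z0 hk h0 u a, h, CycW.z0 hk h0]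
    have e1 : u a = u (-b) := by
      rw [← CycW.z1 hk h0 u a, h, CycW.z1 hk h0]
    have e0 := hu.inj e0
    have e1 := hu.inj e1
    refine CycW.natCast_ne (k := k) (s := 2) (t := 0) (by omega) h0 (by omega) ?_
    push_cast
    linear_combination e0 - e1
  have hf : Function.Injective f := by
    rintro (a | a) (b | b) h
    · exact congrArg _ (CycW.T_inj hk hu h)
    · exact absurd h (hne a b)
    · exact absurd h.symm (hne b a)
    · exact congrArg _ (CycW.T_inj hk hu' h)
  have h1 := CycW.one_dir hk h0 hu
  have h2 := CycW.one_dir hk h0 hu'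
  calc (k : ℝ) ^ k / (2 * (Fintype.card V : ℝ) ^ k)
      = (k : ℝ) ^ k / (4 * (Fintype.card V : ℝ) ^ k)
        + (k : ℝ) ^ k / (4 * (Fintype.card V : ℝ) ^ k) := by
        rw [← mul_div_mul_left _ _ (two_ne_zero (α := ℝ)), ← add_div]
        ring_nf
    _ ≤ ∑ s, wt G k (tupFun h0 (f s)) := by
        rw [Fintype.sum_sum_type]
        exact add_le_add h1 h2
    _ = ∑ z ∈ univ.image f, wt G k (tupFun h0 z) := by
        rw [Finset.sum_image (fun a _ b _ h => hf h)]
    _ ≤ _ := by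
        apply Finset.sum_le_sum_of_subset_of_nonneg
        · intro z hz
          obtain ⟨s, _, rfl⟩ := mem_image.1 hz
          rw [mem_filter]
          refine ⟨mem_univ _, ?_⟩
          rcases s with a | a
          · exact ⟨CycW.good hk h0 hu a, (CycW.T_range hk u a).trans hr⟩
          · exact ⟨CycW.good hk h0 hu' a, (CycW.T_range hk u' a).trans hr'⟩
        · intro z _ _
          exact Finset.prod_nonneg fun i _ => by positivity
end
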